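/- arXiv:1710.07973 — 10 statements merged into one kernel-verified Lean document; each statement's English description precedes it below -/
import Mathlib

section
/- Let n ≥ 2 and 1 ≤ k ≤ n be integers. Every finite set U ⊆ ℝ^n that is shattered by the family H_k^n of half-spaces generated by k-sparse vectors satisfies |U| ≤ 2·k·lg(n·e); in particular, the VC-dimension of H_k^n is at most ⌊2k·lg(ne)⌋. -/
open Real

noncomputable section

/-- A vector `x : ℝ^n` is `k`-sparse if it has at most `k` nonzero components. -/
def sparse (n k : ℕ) (x : Fin n → ℝ) : Prop :=
  ∃ s : Finset (Fin n), s.card ≤ k ∧ ∀ i ∉ s, x i = 0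

/-- The half-space generated by `x`. -/
def halfSpace (n : ℕ) (x : Fin n → ℝ) : Set (Fin n → ℝ) :=
  {a | 0 ≤ ∑ i, a i * x i}

/-- A finite set `U` is shattered by a family `C` of subsets. -/
def Shatters {X : Type*} (C : Set (Set X)) (U : Finset X) : Prop :=
  ∀ B ⊆ U, ∃ A ∈ C, A ∩ (U : Set X) = (B : Set X)

theorem aux_rel {n : ℕ} (s : Finset (Fin n)) (t : Finset (Fin n → ℝ)) (h : s.card < t.card) :
    ∃ c : (Fin n → ℝ) → ℝ, (∃ u ∈ t, c u < 0) ∧ ∀ i ∈ s, ∑ u ∈ t, c u * u i = 0 := by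
  classical
  have hli : ¬ LinearIndependent ℝ (fun (u : t) (i : s) => (u : Fin n → ℝ) i) := by
    intro hl
    have := hl.fintype_card_le_finrank
    simp at this
    omega
  rw [Fintype.not_linearIndependent_iff] at hli
  obtain ⟨g, hg, u, hu⟩ := hli
  have key : ∃ g : t → ℝ, (∑ u, g u • (fun (i : s) => (u : Fin n → ℝ) i)) = 0 ∧ ∃ u, g u < 0 := by
    rcases lt_or_gt_of_ne hu with h1 | h1
    · exact ⟨g, hg, u, h1⟩
    · refine ⟨fun u => - g u, ?_, u, by simpa using h1⟩
      simp only [neg_smul, Finset.sum_neg_distrib, hg, neg_zero]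
  obtain ⟨g, hg, u, hu⟩ := key
  refine ⟨fun v => if hv : v ∈ t then g ⟨v, hv⟩ else 0, ⟨u, u.2, by simpa using hu⟩, ?_⟩
  intro i hi
  have := congrFun hg ⟨i, hi⟩
  simp only [Finset.sum_apply, Pi.smul_apply, smul_eq_mul, Pi.zero_apply] at this
  rw [← Finset.sum_coe_sort t, ← this]
  refine Finset.sum_congr rfl fun v _ => ?_
  simp

theorem aux_fam {n : ℕ} (s : Finset (Fin n)) (U : Finset (Fin n → ℝ))
    (F : Finset (Finset (Fin n → ℝ)))
    (hF : ∀ B ∈ F, B ⊆ U ∧ ∃ x : Fin n → ℝ, (∀ i ∉ s, x i = 0) ∧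
      ∀ u ∈ U, u ∈ B ↔ 0 ≤ ∑ i, u i * x i) :
    F.card ≤ ∑ i ∈ Finset.range (s.card + 1), U.card.choose i := by
  classical
  refine (Finset.card_le_card_shatterer F).trans ?_
  have hsub : F.shatterer ⊆ (Finset.range (s.card + 1)).biUnion (fun i => U.powersetCard i) := by
    intro t ht
    rw [Finset.mem_shatterer] at ht
    obtain ⟨B, hB, htB⟩ := ht.exists_superset
    have htU : t ⊆ U := htB.trans (hF B hB).1
    simp only [Finset.mem_biUnion, Finset.mem_range, Finset.mem_powersetCard]
    refine ⟨t.card, ?_, htU, rfl⟩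
    by_contra hlt
    obtain ⟨c, ⟨u, hut, hu⟩, hc⟩ := aux_rel s t (by omega)
    obtain ⟨A, hA, hAt⟩ := ht (Finset.filter_subset (fun v => 0 ≤ c v) t)
    obtain ⟨-, x, hx, hxA⟩ := hF A hA
    have hmem : ∀ v ∈ t, (0 ≤ c v ↔ 0 ≤ ∑ i, v i * x i) := by
      intro v hv
      rw [← hxA v (htU hv)]
      have := Finset.ext_iff.1 hAt v
      simp only [Finset.mem_inter, Finset.mem_filter, hv, true_and] at this
      exact this.symm
    have hzero : ∑ v ∈ t, c v * ∑ i, v i * x i = 0 := by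
      simp only [Finset.mul_sum]
      rw [Finset.sum_comm]
      refine Finset.sum_eq_zero fun i _ => ?_
      by_cases hi : i ∈ s
      · simp only [← mul_assoc]
        rw [← Finset.sum_mul, hc i hi, zero_mul]
      · simp [hx i hi]
    have hpos : 0 < ∑ v ∈ t, c v * ∑ i, v i * x i := by
      refine Finset.sum_pos' (fun v hv => ?_) ⟨u, hut, ?_⟩
      · by_cases h0 : 0 ≤ c v
        · exact mul_nonneg h0 ((hmem v hv).1 h0)
        · have h1 := mt (hmem v hv).2 h0
          exact (mul_pos_of_neg_of_neg (not_le.1 h0) (not_le.1 h1)).le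
      · have h1 := mt (hmem u hut).2 (not_le.2 hu)
        exact mul_pos_of_neg_of_neg hu (not_le.1 h1)
    exact hpos.ne' hzero
  refine (Finset.card_le_card hsub).trans (Finset.card_biUnion_le.trans ?_)
  simp

theorem aux_sum (m k : ℕ) (hk : 1 ≤ k) (hkm : k ≤ m) :
    ((∑ i ∈ Finset.range (k + 1), m.choose i : ℕ) : ℝ) ≤ (Real.exp 1 * (m / k)) ^ k := by
  have hk0 : (0:ℝ) < k := by exact_mod_cast hk
  have hm0 : (0:ℝ) < m := by exact_mod_cast hk.trans hkm
  have hr1 : (k / m : ℝ) ≤ 1 := by rw [div_le_one hm0]; exact_mod_cast hkm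
  have hr0 : (0:ℝ) < k / m := by positivity
  have h1 : ((∑ i ∈ Finset.range (k + 1), m.choose i : ℕ) : ℝ) * (k / m : ℝ) ^ k
      ≤ Real.exp 1 ^ k := by
    calc ((∑ i ∈ Finset.range (k + 1), m.choose i : ℕ) : ℝ) * (k / m : ℝ) ^ k
        = ∑ i ∈ Finset.range (k + 1), (k / m : ℝ) ^ k * m.choose i := by
          push_cast; rw [mul_comm, Finset.mul_sum]
      _ ≤ ∑ i ∈ Finset.range (k + 1), (k / m : ℝ) ^ i * m.choose i := by
          refine Finset.sum_le_sum fun i hi => ?_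
          refine mul_le_mul_of_nonneg_right ?_ (by positivity)
          exact pow_le_pow_of_le_one hr0.le hr1 (by simp at hi; omega)
      _ ≤ ∑ i ∈ Finset.range (m + 1), (k / m : ℝ) ^ i * m.choose i := by
          refine Finset.sum_le_sum_of_subset_of_nonneg ?_ (fun i _ _ => by positivity)
          exact Finset.range_subset_range.2 (by omega)
      _ = (k / m + 1 : ℝ) ^ m := by rw [add_pow]; simp
      _ ≤ (Real.exp (k / m)) ^ m := by
          exact pow_le_pow_left₀ (by positivity) (Real.add_one_le_exp _) _
      _ = Real.exp 1 ^ k := by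
          rw [← Real.exp_nat_mul, ← Real.exp_nat_mul]; congr 1; field_simp
  have h2 : (m / k : ℝ) ^ k = ((k / m : ℝ) ^ k)⁻¹ := by rw [← inv_pow, inv_div]
  rw [mul_pow, h2, ← div_eq_mul_inv, le_div_iff₀ (by positivity)]
  exact h1

theorem aux_count (n k : ℕ) (hkn : k ≤ n) (U : Finset (Fin n → ℝ))
    (hU : Shatters {H | ∃ x : Fin n → ℝ, sparse n k x ∧ H = halfSpace n x} U) :
    2 ^ U.card ≤ n ^ k * ∑ i ∈ Finset.range (k + 1), U.card.choose i := by
  classical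
  let F : Finset (Fin n) → Finset (Finset (Fin n → ℝ)) := fun s =>
    U.powerset.filter (fun B => ∃ x : Fin n → ℝ, (∀ i ∉ s, x i = 0) ∧
      ∀ u ∈ U, u ∈ B ↔ 0 ≤ ∑ i, u i * x i)
  have hsub : U.powerset ⊆ ((Finset.univ : Finset (Fin n)).powersetCard k).biUnion F := by
    intro B hB
    obtain ⟨A, ⟨x, ⟨s, hs, hx⟩, rfl⟩, hA⟩ := hU B (Finset.mem_powerset.1 hB)
    obtain ⟨s', hss', hs'⟩ := Finset.exists_superset_card_eq hs (by simpa using hkn)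
    simp only [Finset.mem_biUnion, F, Finset.mem_filter, Finset.mem_powersetCard]
    refine ⟨s', ⟨Finset.subset_univ _, hs'⟩, hB, x, fun i hi => hx i fun h => hi (hss' h), ?_⟩
    intro u hu
    have := Set.ext_iff.1 hA u
    simp only [halfSpace, Set.mem_inter_iff, Set.mem_setOf_eq, Finset.mem_coe, hu, and_true] at this
    exact this.symm
  have h1 := Finset.card_le_card hsub
  rw [Finset.card_powerset] at h1
  refine h1.trans ((Finset.card_biUnion_le_card_mul _ _
    (∑ i ∈ Finset.range (k + 1), U.card.choose i) ?_).trans ?_)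
  · intro s hs
    have hsk := (Finset.mem_powersetCard.1 hs).2
    have := aux_fam s U (F s) (fun B hB => by
      simp only [F, Finset.mem_filter, Finset.mem_powerset] at hB
      exact hB)
    rwa [hsk] at this
  · refine Nat.mul_le_mul_right _ ?_
    rw [Finset.card_powersetCard]
    simpa using Nat.choose_le_pow n k

theorem aux_two (t : ℝ) (ht : 4 < t) : t < (2:ℝ) ^ (t / 2) := by
  have h1 : (2:ℝ) ^ (t / 2) = 4 * 2 ^ (t / 2 - 2) := by
    rw [Real.rpow_sub (by norm_num)]; norm_num; ring
  have h2 : (2:ℝ) ^ (t / 2 - 2) = Real.exp (Real.log 2 * (t / 2 - 2)) :=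
    Real.rpow_def_of_pos (by norm_num) _
  have h3 := Real.add_one_le_exp (Real.log 2 * (t / 2 - 2))
  have h4 := Real.log_two_gt_d9
  rw [h1, h2]
  nlinarith

theorem vc_upper_bound (n k : ℕ) (hn : 2 ≤ n) (hk1 : 1 ≤ k) (hkn : k ≤ n)
    (U : Finset (Fin n → ℝ))
    (hU : Shatters {H | ∃ x : Fin n → ℝ, sparse n k x ∧ H = halfSpace n x} U) :
    (U.card : ℝ) ≤ 2 * k * logb 2 (n * Real.exp 1) := by
  have hcount := aux_count n k hkn U hU
  set m := U.card
  have hk0 : (0:ℝ) < k := by exact_mod_cast hk1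
  have hn2 : (2:ℝ) ≤ n := by exact_mod_cast hn
  have he : (2:ℝ) < Real.exp 1 := by have := Real.exp_one_gt_d9; linarith
  have hL : 2 < logb 2 (n * Real.exp 1) := by
    rw [Real.lt_logb_iff_rpow_lt (by norm_num) (by positivity)]
    norm_num
    nlinarith
  by_contra hcon
  push Not at hcon
  have hkm : k ≤ m := by
    have : (k:ℝ) ≤ m := by nlinarith
    exact_mod_cast this
  have hs := aux_sum m k hk1 hkm
  have h1 : (2:ℝ) ^ m ≤ (n:ℝ) ^ k * (Real.exp 1 * (m / k)) ^ k := by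
    have : (2:ℝ) ^ m ≤ (n:ℝ) ^ k * ((∑ i ∈ Finset.range (k + 1), m.choose i : ℕ) : ℝ) := by
      exact_mod_cast hcount
    exact this.trans (mul_le_mul_of_nonneg_left hs (by positivity))
  set t : ℝ := m / k with ht
  have hLt : 2 * logb 2 (n * Real.exp 1) < t := by
    rw [ht, lt_div_iff₀ hk0]; linarith
  have h2 : (2:ℝ) ^ m = ((2:ℝ) ^ t) ^ k := by
    rw [← Real.rpow_mul_natCast (by norm_num), ht, div_mul_cancel₀ _ hk0.ne', Real.rpow_natCast]
  rw [h2, ← mul_pow] at h1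
  have ht0 : 0 < t := by linarith
  have h3 : (2:ℝ) ^ t ≤ n * (Real.exp 1 * t) :=
    le_of_pow_le_pow_left₀ (by omega) (by positivity) h1
  have h4 : n * Real.exp 1 < (2:ℝ) ^ (t / 2) := by
    rw [← Real.logb_lt_iff_lt_rpow (by norm_num) (by positivity)]
    linarith
  have h5 : (2:ℝ) ^ t = 2 ^ (t / 2) * 2 ^ (t / 2) := by
    rw [← Real.rpow_add (by norm_num)]; congr 1; ring
  have h6 := aux_two t (by linarith)
  have h7 : (0:ℝ) < 2 ^ (t / 2) := by positivity
  nlinarith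
end
end

section
/- Let 1 ≤ k ≤ n be integers. There exists a finite set U ⊆ ℝ^n of cardinality k·(⌊lg(n/k)⌋ + 1) that is shattered by the family H_k^n of half-spaces generated by k-sparse vectors; in particular, the VC-dimension of H_k^n is at least k·(⌊lg(n/k)⌋ + 1). -/
open Real

noncomputable section

theorem vc_aux (n k m : ℕ) (e : Fin k × Finset (Fin m) ↪ Fin n) :
    ∃ u : Fin k × Option (Fin m) → (Fin n → ℝ), ∀ b : Fin k × Option (Fin m) → Prop,
      ∃ x : Fin n → ℝ, sparse n k x ∧ ∀ p, (0 ≤ ∑ i, u p i * x i) ↔ b p := by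
  classical
  let v : Fin k × Option (Fin m) → Fin k × Finset (Fin m) → ℝ := fun p q =>
    if p.1 = q.1 then (match p.2 with
      | none => 1
      | some i => if i ∈ q.2 then 1 else -1) else 0
  refine ⟨fun p => Function.extend e (v p) 0, fun b => ?_⟩
  let S : Fin k → Finset (Fin m) := fun j =>
    Finset.univ.filter (fun i => b (j, some i) ↔ b (j, none))
  let g : Fin k → ℝ := fun j => if b (j, none) then 1 else -1
  refine ⟨fun i => ∑ j, if i = e (j, S j) then g j else 0, ?_, ?_⟩
  · refine ⟨Finset.univ.image (fun j => e (j, S j)), ?_, ?_⟩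
    · exact Finset.card_image_le.trans (by simp)
    · intro i hi
      refine Finset.sum_eq_zero fun j _ => ?_
      rw [if_neg]
      rintro rfl
      exact hi (Finset.mem_image_of_mem _ (Finset.mem_univ j))
  · rintro ⟨j, t⟩
    have h : ∑ i, Function.extend e (v (j, t)) 0 i * (∑ j', if i = e (j', S j') then g j' else 0)
        = v (j, t) (j, S j) * g j := by
      simp_rw [Finset.mul_sum]
      rw [Finset.sum_comm]
      simp only [mul_ite, mul_zero, Finset.sum_ite_eq', Finset.mem_univ, if_true,
        e.injective.extend_apply]
      rw [Finset.sum_eq_single j]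
      · intro j' _ hj
        simp [v, hj.symm]
      · simp
    rw [h]
    cases t with
    | none => by_cases h0 : b (j, none) <;> simp [v, g, h0] <;> norm_num
    | some i =>
      by_cases h0 : b (j, none) <;> by_cases h1 : b (j, some i) <;>
        simp [v, g, S, h0, h1] <;> norm_num

theorem vc_lower_bound (n k : ℕ) (hk1 : 1 ≤ k) (hkn : k ≤ n) :
    ∃ U : Finset (Fin n → ℝ),
      U.card = k * (Nat.floor (logb 2 ((n : ℝ) / (k : ℝ))) + 1) ∧
      Shatters {H | ∃ x : Fin n → ℝ, sparse n k x ∧ H = halfSpace n x} U := by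
  classical
  set m := Nat.floor (logb 2 ((n : ℝ) / (k : ℝ))) with hm
  have hk : (0 : ℝ) < k := by exact_mod_cast hk1
  have hkn' : (k : ℝ) ≤ n := by exact_mod_cast hkn
  have hle : k * 2 ^ m ≤ n := by
    have h1 : (m : ℝ) ≤ logb 2 ((n : ℝ) / k) :=
      Nat.floor_le (Real.logb_nonneg (by norm_num) ((one_le_div hk).2 hkn'))
    rw [Real.le_logb_iff_rpow_le (by norm_num) (div_pos (hk.trans_le hkn') hk),
      Real.rpow_natCast, le_div_iff₀ hk] at h1
    have h2 : ((2 ^ m * k : ℕ) : ℝ) ≤ n := by exact_mod_cast h1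
    rw [mul_comm]
    exact_mod_cast h2
  obtain ⟨e⟩ : Nonempty (Fin k × Finset (Fin m) ↪ Fin n) :=
    Function.Embedding.nonempty_of_card_le (by simpa using hle)
  obtain ⟨u, hu⟩ := vc_aux n k m e
  have hinj : Function.Injective u := by
    intro p q hpq
    obtain ⟨x, -, hx⟩ := hu (fun r => r = q)
    rw [← hx p, hpq, hx q]
  refine ⟨Finset.univ.image u, ?_, ?_⟩
  · rw [Finset.card_image_of_injective _ hinj]
    simp
  · intro B hB
    obtain ⟨x, hs, hx⟩ := hu (fun p => u p ∈ B)
    refine ⟨_, ⟨x, hs, rfl⟩, ?_⟩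
    ext a
    simp only [Set.mem_inter_iff, Finset.mem_coe]
    constructor
    · rintro ⟨h1, h2⟩
      obtain ⟨p, -, rfl⟩ := Finset.mem_image.1 h2
      exact (hx p).1 h1
    · intro h
      refine ⟨?_, hB h⟩
      obtain ⟨p, -, rfl⟩ := Finset.mem_image.1 (hB h)
      exact (hx p).2 h
end
end

section
/- Let n ≥ 2 and 1 ≤ k ≤ n be integers. Every finite set U ⊆ ℝ^n × ℝ that is shattered by the family H_k^{n+1} of affine half-spaces generated by k-sparse vectors and a threshold satisfies |U| ≤ 2·(k+1)·lg(e·(n+1)); in particular, the VC-dimension of H_k^{n+1} is at most ⌊2(k+1)·lg(e(n+1))⌋. -/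
open Real

noncomputable section

/-- The affine half-space in `ℝ^n × ℝ` generated by `x` and a threshold `θ`. -/
def affHalfSpace (n : ℕ) (x : Fin n → ℝ) (θ : ℝ) : Set ((Fin n → ℝ) × ℝ) :=
  {p | 0 ≤ (∑ i, p.1 i * x i) + p.2 * θ}

lemma aux_vc {α V : Type*} [Fintype α] [DecidableEq α] [AddCommGroup V] [Module ℝ V]
    [FiniteDimensional ℝ V] (p : α → V) (F : Finset (Finset α))
    (hF : ∀ B ∈ F, ∃ f : V →ₗ[ℝ] ℝ, ∀ a, a ∈ B ↔ 0 ≤ f (p a)) (T : Finset α)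
    (hT : F.Shatters T) : T.card ≤ Module.finrank ℝ V := by
  by_contra hlt
  have hdep : ¬ LinearIndependent ℝ (fun t : T => p t) := by
    intro h
    have := h.fintype_card_le_finrank
    simp at this
    omega
  rw [Fintype.not_linearIndependent_iff] at hdep
  have key : ∀ g : T → ℝ, ∑ i, g i • p i = 0 → ∀ i, 0 ≤ g i := by
    intro g hg i
    by_contra hi
    obtain ⟨B, hB, hTB⟩ := hT
      (t := (Finset.univ.filter (fun i : T => 0 ≤ g i)).map (Function.Embedding.subtype _)) (by
        intro a ha
        simp at ha
        exact ha.1)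
    obtain ⟨f, hf⟩ := hF B hB
    have hm : ∀ j : T, (0 ≤ g j ↔ 0 ≤ f (p j)) := by
      intro j
      rw [← hf]
      have := congrArg (fun s => (j : α) ∈ s) hTB
      simp at this
      exact this.symm
    have h0 : ∑ i, g i * f (p i) = 0 := by
      have := congrArg f hg
      simpa using this
    have hnn : ∀ j ∈ Finset.univ, 0 ≤ g j * f (p j) := by
      intro j _
      by_cases h : 0 ≤ g j
      · exact mul_nonneg h ((hm j).1 h)
      · have := mt (hm j).2 h
        push Not at h this
        exact (mul_pos_of_neg_of_neg h this).le
    have := (Finset.sum_eq_zero_iff_of_nonneg hnn).1 h0 i (Finset.mem_univ _)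
    have h2 := mt (hm i).2 hi
    push Not at hi h2
    have := mul_pos_of_neg_of_neg hi h2
    linarith
  obtain ⟨g, hg, i, hi⟩ := hdep
  have h1 := key g hg i
  have h2 := key (fun i => - g i) (by simp only [neg_smul, Finset.sum_neg_distrib, hg, neg_zero]) i
  exact hi (by simp at h2; linarith)

lemma aux_sum_s2 (m d : ℕ) (hd : 0 < d) (hm : d ≤ m) :
    (∑ i ∈ Finset.Iic d, (m.choose i : ℝ)) ≤ (exp 1 * m / d) ^ d := by
  have hd' : (0:ℝ) < d := by exact_mod_cast hd
  have hm' : (0:ℝ) < m := by exact_mod_cast hd.trans_le hm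
  set t : ℝ := d / m with ht
  have ht0 : 0 < t := by positivity
  have ht1 : t ≤ 1 := by rw [ht, div_le_one hm']; exact_mod_cast hm
  have h1 : (∑ i ∈ Finset.Iic d, (m.choose i : ℝ)) * t ^ d ≤ exp 1 ^ d := by
    calc (∑ i ∈ Finset.Iic d, (m.choose i : ℝ)) * t ^ d
        ≤ ∑ i ∈ Finset.Iic d, (m.choose i : ℝ) * t ^ i := by
          rw [Finset.sum_mul]
          refine Finset.sum_le_sum fun i hi => ?_
          exact mul_le_mul_of_nonneg_left
            (pow_le_pow_of_le_one ht0.le ht1 (Finset.mem_Iic.1 hi)) (by positivity)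
      _ ≤ ∑ i ∈ Finset.range (m+1), (m.choose i : ℝ) * t ^ i := by
          refine Finset.sum_le_sum_of_subset_of_nonneg ?_ (fun i _ _ => by positivity)
          intro i hi
          simp at hi ⊢
          omega
      _ = (t + 1) ^ m := by
          rw [add_pow]
          refine Finset.sum_congr rfl fun i _ => ?_
          simp [mul_comm]
      _ ≤ (exp t) ^ m := pow_le_pow_left₀ (by positivity) (add_one_le_exp t) _
      _ = exp 1 ^ d := by
          rw [← exp_nat_mul, ← exp_nat_mul]
          congr 1
          rw [ht]; field_simp
  have h2 : (exp 1 * m / d) ^ d = exp 1 ^ d / t ^ d := by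
    rw [← div_pow, ht]; congr 1; field_simp
  rw [h2, le_div_iff₀ (by positivity)]
  exact h1

lemma aux_card {α V : Type*} [Fintype α] [DecidableEq α] [AddCommGroup V] [Module ℝ V]
    [FiniteDimensional ℝ V] (p : α → V) (F : Finset (Finset α))
    (hF : ∀ B ∈ F, ∃ f : V →ₗ[ℝ] ℝ, ∀ a, a ∈ B ↔ 0 ≤ f (p a)) (d : ℕ)
    (hd : Module.finrank ℝ V ≤ d) :
    F.card ≤ ∑ i ∈ Finset.Iic d, (Fintype.card α).choose i := by
  refine (Finset.card_le_card_shatterer F).trans (Finset.card_shatterer_le_sum_vcDim.trans ?_)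
  refine Finset.sum_le_sum_of_subset (Finset.Iic_subset_Iic.2 ?_)
  refine Finset.sup_le fun T hT => ?_
  exact (aux_vc p F hF T (by simpa using hT)).trans hd

lemma aux_num (N d m : ℕ) (hd : 2 ≤ d) (hN : 4 ≤ N)
    (h : (2:ℝ) ^ m ≤ (exp 1 * N / d) ^ d * (exp 1 * m / d) ^ d) :
    (m : ℝ) ≤ 2 * d * logb 2 (exp 1 * N) := by
  by_contra hlt
  push Not at hlt
  have hN0 : (0:ℝ) < N := by positivity
  have hd2 : (2:ℝ) ≤ d := by exact_mod_cast hd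
  have hd0 : (0:ℝ) < d := by linarith
  have hl2 : 0 < log 2 := log_pos (by norm_num)
  have hlN : 0 ≤ log N := log_natCast_nonneg N
  set A := 1 + log N with hA
  have hlog : log (exp 1 * N) = A := by
    rw [log_mul (by positivity) (by positivity), log_exp]
  set m0 : ℝ := 2 * d * A / log 2 with hm0
  have hm0e : 2 * d * logb 2 (exp 1 * N) = m0 := by
    rw [logb, hlog, hm0]; ring
  rw [hm0e] at hlt
  have hA0 : 0 < A := by linarith
  have hm00 : 0 < m0 := by positivity
  have hmpos : (0:ℝ) < m := by linarith
  have h1 := log_le_log (by positivity) h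
  rw [log_mul (by positivity) (by positivity), log_pow, log_pow, log_pow,
    log_div (by positivity) (by positivity), log_div (by positivity) (by positivity), hlog,
    log_mul (by positivity) (by positivity), log_exp] at h1
  have hpow : exp 1 * N ≤ 2 ^ N := by
    have he : exp 1 < 2.7182818286 := exp_one_lt_d9
    have : ∀ j : ℕ, 4 ≤ j → 3 * (j:ℝ) ≤ 2 ^ j := by
      intro j hj
      induction j, hj using Nat.le_induction with
      | base => norm_num
      | succ j hj ih =>
        have : (4:ℝ) ≤ j := by exact_mod_cast hj
        rw [pow_succ]; push_cast; linarith
    have := this N hN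
    nlinarith
  have hAN : A ≤ N * log 2 := by
    rw [← hlog, ← log_pow]
    exact log_le_log (by positivity) hpow
  have hm0le : m0 ≤ N * d * d := by
    rw [hm0, div_le_iff₀ hl2]
    have : 2 * d * A ≤ 2 * d * (N * log 2) := by gcongr
    have h3 : 2 * d * (N * log 2) ≤ d * d * (N * log 2) := by gcongr
    linarith
  have hlm0 : log m0 ≤ log N + 2 * log d := by
    have := log_le_log hm00 hm0le
    rw [log_mul (by positivity) (by positivity), log_mul (by positivity) (by positivity)] at this
    linarith
  have htan : log m ≤ log m0 + (m / m0 - 1) := by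
    have := log_le_sub_one_of_pos (show (0:ℝ) < m / m0 by positivity)
    rw [log_div (by positivity) (by positivity)] at this
    linarith
  have h2 : m * log 2 ≤ d * (2 * A + (m / m0 - 1)) := by
    have : d * (A - log d) + d * (1 + log m - log d) ≤ d * (2 * A + (m / m0 - 1)) := by
      rw [← mul_add]
      refine mul_le_mul_of_nonneg_left ?_ hd0.le
      linarith
    linarith
  have h4 : m0 * log 2 = 2 * d * A := by rw [hm0]; field_simp
  have h5 : (m / m0 : ℝ) * m0 = m := by field_simp
  have hr : 1 < (m / m0 : ℝ) := by rw [lt_div_iff₀ hm00]; linarith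
  set r : ℝ := m / m0
  have h6 : r * (2 * d * A) ≤ d * (2 * A + (r - 1)) := by
    rw [← h4]; rw [← h5] at h2; linarith
  have h7 : d * ((r - 1) * (2 * A - 1)) ≤ 0 := by linarith
  have : 0 < d * ((r - 1) * (2 * A - 1)) := by
    apply mul_pos hd0 (mul_pos _ _) <;> linarith
  linarith

theorem vc_upper_bound_affine (n k : ℕ) (hn : 2 ≤ n) (hk1 : 1 ≤ k) (hkn : k ≤ n)
    (U : Finset ((Fin n → ℝ) × ℝ))
    (hU : Shatters {H | ∃ (x : Fin n → ℝ) (θ : ℝ), sparse n k x ∧ H = affHalfSpace n x θ} U) :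
    (U.card : ℝ) ≤ 2 * (k + 1) * logb 2 (Real.exp 1 * (n + 1)) := by
  classical
  let V (S : Finset (Fin n)) := (S → ℝ) × ℝ
  let p (S : Finset (Fin n)) (u : U) : (S → ℝ) × ℝ := (fun i => u.1.1 i, u.1.2)
  let P (S : Finset (Fin n)) (B : Finset U) : Prop :=
    ∃ f : ((S → ℝ) × ℝ) →ₗ[ℝ] ℝ, ∀ a, a ∈ B ↔ 0 ≤ f (p S a)
  have hfr : ∀ S : Finset (Fin n), Module.finrank ℝ ((S → ℝ) × ℝ) = S.card + 1 := by
    intro S; simp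
  have hcov : ∀ B : Finset U, ∃ S ∈ Finset.powersetCard k (Finset.univ : Finset (Fin n)),
      P S B := by
    intro B
    obtain ⟨A, ⟨x, θ, ⟨s, hs, hx⟩, rfl⟩, hAB⟩ := hU (B.map (Function.Embedding.subtype _)) (by
      intro a ha
      simp at ha
      exact ha.1)
    obtain ⟨S, hsS, -, hS⟩ := Finset.exists_subsuperset_card_eq (Finset.subset_univ s) hs
      (by simpa using hkn)
    refine ⟨S, by simp [hS], ?_⟩
    refine ⟨LinearMap.coprod (∑ i : S, x i • LinearMap.proj i) (θ • LinearMap.id), fun a => ?_⟩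
    have h1 := congrArg (fun s => (a : (Fin n → ℝ) × ℝ) ∈ s) hAB
    simp [affHalfSpace] at h1
    rw [← h1]
    have h2 : ∑ i, a.1.1 i * x i = ∑ i : S, x i * a.1.1 i := by
      rw [Finset.sum_coe_sort S (fun i => x i * a.1.1 i)]
      symm
      refine (Finset.sum_subset (Finset.subset_univ S) ?_).trans
        (Finset.sum_congr rfl fun i _ => mul_comm _ _)
      intro i _ hi
      rw [hx i (fun h => hi (hsS h)), zero_mul]
    rw [h2]
    simp [p, mul_comm]
  have hA1 : (1:ℝ) ≤ logb 2 (Real.exp 1 * (n + 1)) := by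
    rw [le_logb_iff_rpow_le (by norm_num) (by positivity)]
    have : (2:ℝ) ≤ exp 1 := by have := add_one_le_exp (1:ℝ); linarith
    have hn' : (2:ℝ) ≤ n := by exact_mod_cast hn
    rw [rpow_one]; nlinarith
  have hk0 : (1:ℝ) ≤ k := by exact_mod_cast hk1
  by_cases hn3 : n = 2
  · have hle := aux_vc (fun u : U => u.1) Finset.univ (fun B _ => by
      obtain ⟨S, hS, f, hf⟩ := hcov B
      let g : ((Fin n → ℝ) × ℝ) →ₗ[ℝ] ((S → ℝ) × ℝ) :=
        LinearMap.prodMap (LinearMap.funLeft ℝ ℝ (fun i : S => (i : Fin n))) LinearMap.id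
      exact ⟨f.comp g, fun a => hf a⟩) Finset.univ (by
        intro t _
        exact ⟨t, Finset.mem_univ _, Finset.univ_inter t⟩)
    have : (U.card : ℝ) ≤ 3 := by
      have h3 : U.card ≤ n + 1 := by simpa using hle
      have h4 : U.card ≤ 3 := by omega
      exact_mod_cast h4
    nlinarith
  by_cases hm : U.card < k + 1
  · have : (U.card : ℝ) ≤ k + 1 := by exact_mod_cast hm.le
    nlinarith
  push Not at hm
  have hcount : 2 ^ U.card ≤ n.choose k * ∑ i ∈ Finset.Iic (k+1), U.card.choose i := by
    calc 2 ^ U.card = (Finset.univ : Finset (Finset U)).card := by simp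
      _ ≤ ((Finset.powersetCard k (Finset.univ : Finset (Fin n))).biUnion
            (fun S => Finset.univ.filter (P S))).card := by
          refine Finset.card_le_card fun B _ => ?_
          obtain ⟨S, hS, hB⟩ := hcov B
          exact Finset.mem_biUnion.2 ⟨S, hS, by simpa using hB⟩
      _ ≤ (Finset.powersetCard k (Finset.univ : Finset (Fin n))).card *
            ∑ i ∈ Finset.Iic (k+1), U.card.choose i := by
          refine Finset.card_biUnion_le_card_mul _ _ _ fun S hS => ?_
          have := aux_card (p S) (Finset.univ.filter (P S)) (fun B hB =>
            (Finset.mem_filter.1 hB).2) (k+1) (by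
              rw [hfr, (Finset.mem_powersetCard.1 hS).2])
          simpa using this
      _ = _ := by simp
  have hc2 : (n.choose k : ℝ) ≤ (exp 1 * (n+1 : ℕ) / (k+1 : ℕ)) ^ (k+1) := by
    refine le_trans ?_ (aux_sum_s2 (n+1) (k+1) (by omega) (by omega))
    have h1 : n.choose k ≤ (n+1).choose (k+1) := by
      rw [Nat.choose_succ_succ]; omega
    refine le_trans (by exact_mod_cast h1 : (n.choose k : ℝ) ≤ ((n+1).choose (k+1) : ℝ)) ?_
    exact Finset.single_le_sum (f := fun i => ((n+1).choose i : ℝ))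
      (fun i _ => by positivity) (by simp)
  have hfin := aux_num (n+1) (k+1) U.card (by omega) (by omega) (by
    refine le_trans (by exact_mod_cast hcount : (2:ℝ) ^ U.card ≤
      (n.choose k : ℝ) * ∑ i ∈ Finset.Iic (k+1), (U.card.choose i : ℝ)) ?_
    exact mul_le_mul hc2 (aux_sum_s2 U.card (k+1) (by omega) hm)
      (Finset.sum_nonneg fun i _ => by positivity) (by positivity))
  push_cast at hfin
  exact hfin
end
end

section
/- Let 1 ≤ k ≤ n be integers. There exists a finite set U ⊆ ℝ^n × ℝ of cardinality k·(⌊lg(n/k)⌋ + 1) that is shattered by the family H_k^{n+1} of affine half-spaces generated by k-sparse vectors and a threshold; in particular, the VC-dimension of H_k^{n+1} is at least k·(⌊lg(n/k)⌋ + 1). -/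
open Real

noncomputable section

lemma aux_floor (n k : ℕ) (hk1 : 1 ≤ k) (hkn : k ≤ n) :
    k * 2 ^ (Nat.floor (logb 2 ((n : ℝ) / (k : ℝ)))) ≤ n := by
  have hk : (0 : ℝ) < k := by exact_mod_cast hk1
  have hn : (k : ℝ) ≤ n := by exact_mod_cast hkn
  have h1 : (1 : ℝ) ≤ (n : ℝ) / k := (one_le_div hk).2 hn
  have h0 : 0 ≤ logb 2 ((n : ℝ) / (k : ℝ)) := logb_nonneg (by norm_num) h1
  have h2 := Nat.floor_le h0
  rw [Real.le_logb_iff_rpow_le (by norm_num) (by linarith), Real.rpow_natCast,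
    le_div_iff₀ hk] at h2
  have h3 : ((k * 2 ^ (Nat.floor (logb 2 ((n : ℝ) / (k : ℝ)))) : ℕ) : ℝ) ≤ n := by
    push_cast
    linarith
  exact_mod_cast h3

def sgnv {m : ℕ} (S : Fin m → Bool) : Option (Fin m) → ℝ
  | none => 1
  | some i => if S i then 1 else -1

def pt {n k m : ℕ} (e : Fin k × (Fin m → Bool) ↪ Fin n) (p : Fin k × Option (Fin m)) :
    (Fin n → ℝ) × ℝ :=
  (Function.extend e (fun q => if q.1 = p.1 then sgnv q.2 p.2 else 0) 0, 0)

open Classical in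
lemma aux_shatter {n k m : ℕ} (e : Fin k × (Fin m → Bool) ↪ Fin n)
    (P : Fin k × Option (Fin m) → Prop) :
    ∃ x : Fin n → ℝ, sparse n k x ∧ ∀ p, pt e p ∈ affHalfSpace n x 0 ↔ P p := by
  let S : Fin k → Fin m → Bool := fun j i => decide (P (j, some i) ↔ P (j, none))
  let σ : Fin k → ℝ := fun j => if P (j, none) then 1 else -1
  refine ⟨∑ j, Pi.single (e (j, S j)) (σ j), ⟨Finset.univ.image fun j => e (j, S j), ?_, ?_⟩, ?_⟩
  · exact Finset.card_image_le.trans (by simp)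
  · intro i hi
    rw [Finset.sum_apply]
    refine Finset.sum_eq_zero fun j _ => ?_
    rw [Pi.single_eq_of_ne]
    rintro rfl
    exact hi (Finset.mem_image_of_mem _ (Finset.mem_univ j))
  · rintro ⟨j, o⟩
    have key : ∑ i, (pt e (j, o)).1 i * (∑ j, Pi.single (e (j, S j)) (σ j) : Fin n → ℝ) i
        = sgnv (S j) o * σ j := by
      simp only [Finset.sum_apply, Finset.mul_sum]
      rw [Finset.sum_comm]
      simp only [Pi.single_apply, mul_ite, mul_zero, Finset.sum_ite_eq', Finset.mem_univ, if_true, pt,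
        e.injective.extend_apply, ite_mul, zero_mul]
    rw [affHalfSpace, Set.mem_setOf_eq]
    rw [key, mul_zero, add_zero]
    rcases o with _ | i
    · by_cases h : P (j, none) <;> simp [sgnv, σ, h] <;> norm_num
    · by_cases h : P (j, none) <;> by_cases h' : P (j, some i) <;> simp [sgnv, σ, S, h, h'] <;> norm_num

theorem vc_lower_bound_affine (n k : ℕ) (hk1 : 1 ≤ k) (hkn : k ≤ n) :
    ∃ U : Finset ((Fin n → ℝ) × ℝ),
      U.card = k * (Nat.floor (logb 2 ((n : ℝ) / (k : ℝ))) + 1) ∧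
      Shatters {H | ∃ (x : Fin n → ℝ) (θ : ℝ), sparse n k x ∧ H = affHalfSpace n x θ} U := by
  classical
  have hfl := aux_floor n k hk1 hkn
  generalize Nat.floor (logb 2 ((n : ℝ) / (k : ℝ))) = m at hfl ⊢
  obtain ⟨e⟩ : Nonempty (Fin k × (Fin m → Bool) ↪ Fin n) :=
    Function.Embedding.nonempty_of_card_le (by simpa using hfl)
  have hinj : Function.Injective (pt e) := by
    intro p q hpq
    obtain ⟨x, -, hx⟩ := aux_shatter e (fun r => r = p)
    exact ((hx q).1 (hpq ▸ (hx p).2 rfl)).symm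
  refine ⟨Finset.univ.image (pt e), ?_, ?_⟩
  · rw [Finset.card_image_of_injective _ hinj]
    simp
  · intro B hB
    obtain ⟨x, hs, hx⟩ := aux_shatter e (fun r => pt e r ∈ B)
    refine ⟨_, ⟨x, 0, hs, rfl⟩, ?_⟩
    ext u
    constructor
    · rintro ⟨h1, h2⟩
      obtain ⟨p, -, rfl⟩ := Finset.mem_image.1 (Finset.mem_coe.1 h2)
      exact (hx p).1 h1
    · intro h
      have h2 := hB (Finset.mem_coe.1 h)
      obtain ⟨p, -, rfl⟩ := Finset.mem_image.1 h2
      exact ⟨(hx p).2 h, h2⟩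
end
end

section
/- Let 1 ≤ k ≤ n be integers and let U ⊆ ℝ^n be a finite set of cardinality l ≥ k. Then the number of distinct intersections of U with half-spaces generated by k-sparse vectors satisfies |{H(x) ∩ U : x ∈ Σ_k}| ≤ C(n,k)·(e·l/k)^k ≤ (n·e·l/k)^k, where C(n,k) denotes the binomial coefficient n choose k. -/
open Real

noncomputable section

lemma sbh_dep {n : ℕ} (T : Finset (Fin n)) (s : Finset (Fin n → ℝ)) (h : T.card < s.card) :
    ∃ c : s → ℝ, (∀ i ∈ T, ∑ a : s, c a * a.1 i = 0) ∧ ∃ a, c a < 0 := by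
  classical
  let M : Matrix T s ℝ := fun i a => a.1 i.1
  have hk : LinearMap.ker M.mulVecLin ≠ ⊥ := by
    apply LinearMap.ker_ne_bot_of_finrank_lt
    simpa using h
  obtain ⟨c, hc, hc0⟩ := (Submodule.ne_bot_iff _).1 hk
  have hz : ∀ i ∈ T, ∑ a : s, c a * a.1 i = 0 := by
    intro i hi
    have := congrFun (LinearMap.mem_ker.1 hc) ⟨i, hi⟩
    simp only [Matrix.mulVecLin_apply, Matrix.mulVec, dotProduct, M, Pi.zero_apply] at this
    rw [← this]
    exact Finset.sum_congr rfl fun a _ => mul_comm _ _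
  obtain ⟨a, ha⟩ := Function.ne_iff.1 hc0
  rcases lt_or_gt_of_ne ha with h1 | h1
  · exact ⟨c, hz, a, h1⟩
  · refine ⟨fun a => - c a, fun i hi => ?_, a, by simpa using h1⟩
    simp only [neg_mul, Finset.sum_neg_distrib, hz i hi, neg_zero]

open Classical in
def sbhFam {n : ℕ} (T : Finset (Fin n)) (U : Finset (Fin n → ℝ)) : Finset (Finset (Fin n → ℝ)) :=
  U.powerset.filter fun S => ∃ x : Fin n → ℝ, (∀ i ∉ T, x i = 0) ∧
    ∀ a, a ∈ S ↔ a ∈ U ∧ 0 ≤ ∑ i, a i * x i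

open Classical in
lemma sbh_shatter {n : ℕ} (T : Finset (Fin n)) (U s : Finset (Fin n → ℝ))
    (hs : (sbhFam T U).Shatters s) : s ⊆ U ∧ s.card ≤ T.card := by
  have hsU : s ⊆ U := by
    obtain ⟨t, ht, hst⟩ := hs.exists_superset
    exact hst.trans (Finset.mem_powerset.1 (Finset.mem_filter.1 ht).1)
  refine ⟨hsU, ?_⟩
  by_contra hlt
  obtain ⟨c, hc, a0, ha0⟩ := sbh_dep T s (not_le.1 hlt)
  obtain ⟨u, hu, hsu⟩ := hs (t := s.filter fun a => ∃ h : a ∈ s, 0 ≤ c ⟨a, h⟩)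
    (Finset.filter_subset _ _)
  obtain ⟨x, hx, hxu⟩ := (Finset.mem_filter.1 hu).2
  have key : ∀ a : s, 0 ≤ ∑ i, a.1 i * x i ↔ 0 ≤ c a := by
    intro a
    have h1 := Finset.ext_iff.1 hsu a.1
    simp only [Finset.mem_inter, Finset.mem_filter, hxu, a.2, hsU a.2, true_and,
      exists_true_left] at h1
    simpa using h1
  have hsum : ∑ a : s, c a * ∑ i, a.1 i * x i = 0 := by
    simp_rw [Finset.mul_sum]
    rw [Finset.sum_comm]
    apply Finset.sum_eq_zero
    intro i _
    by_cases hi : i ∈ T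
    · simp_rw [← mul_assoc]
      rw [← Finset.sum_mul, hc i hi, zero_mul]
    · simp [hx i hi]
  have hpos : 0 < ∑ a : s, c a * ∑ i, a.1 i * x i := by
    apply Finset.sum_pos'
    · intro a _
      rcases le_or_gt 0 (c a) with h | h
      · exact mul_nonneg h ((key a).2 h)
      · exact (mul_pos_of_neg_of_neg h (not_le.1 fun h' => not_le.2 h ((key a).1 h'))).le
    · exact ⟨a0, Finset.mem_univ _, mul_pos_of_neg_of_neg ha0
        (not_le.1 fun h' => not_le.2 ha0 ((key a0).1 h'))⟩
  exact hpos.ne' hsum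

lemma sbh_card {n : ℕ} (T : Finset (Fin n)) (U : Finset (Fin n → ℝ)) :
    (sbhFam T U).card ≤ ∑ j ∈ Finset.range (T.card + 1), U.card.choose j := by
  classical
  calc (sbhFam T U).card ≤ (sbhFam T U).shatterer.card := Finset.card_le_card_shatterer _
    _ ≤ ((Finset.range (T.card + 1)).biUnion fun j => U.powersetCard j).card := by
      apply Finset.card_le_card
      intro s hs
      obtain ⟨h1, h2⟩ := sbh_shatter T U s (by convert Finset.mem_shatterer.1 hs)
      simp only [Finset.mem_biUnion, Finset.mem_range, Finset.mem_powersetCard]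
      exact ⟨s.card, by omega, h1, rfl⟩
    _ ≤ ∑ j ∈ Finset.range (T.card + 1), (U.powersetCard j).card := Finset.card_biUnion_le
    _ = _ := by simp [Finset.card_powersetCard]

lemma sbh_sum (k l : ℕ) (hk : 1 ≤ k) (hkl : k ≤ l) :
    ((∑ j ∈ Finset.range (k + 1), l.choose j : ℕ) : ℝ) ≤ (Real.exp 1 * l / k) ^ k := by
  have hk0 : (0 : ℝ) < k := by exact_mod_cast hk
  have hl0 : (0 : ℝ) < l := by exact_mod_cast (by omega : 0 < l)
  set r : ℝ := k / l with hr
  have hr0 : 0 < r := by positivity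
  have hr1 : r ≤ 1 := by rw [hr, div_le_one hl0]; exact_mod_cast hkl
  have h1 : ((∑ j ∈ Finset.range (k + 1), l.choose j : ℕ) : ℝ) * r ^ k ≤ Real.exp 1 ^ k := by
    calc ((∑ j ∈ Finset.range (k + 1), l.choose j : ℕ) : ℝ) * r ^ k
        = ∑ j ∈ Finset.range (k + 1), r ^ k * (l.choose j : ℝ) := by
          push_cast; rw [Finset.sum_mul]; exact Finset.sum_congr rfl fun _ _ => mul_comm _ _
      _ ≤ ∑ j ∈ Finset.range (k + 1), r ^ j * (l.choose j : ℝ) := by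
          apply Finset.sum_le_sum
          intro j hj
          have hj' : j ≤ k := by have := Finset.mem_range.1 hj; omega
          exact mul_le_mul_of_nonneg_right (pow_le_pow_of_le_one hr0.le hr1 hj') (by positivity)
      _ ≤ ∑ j ∈ Finset.range (l + 1), r ^ j * (l.choose j : ℝ) := by
          apply Finset.sum_le_sum_of_subset_of_nonneg
          · intro j hj
            rw [Finset.mem_range] at *
            omega
          · intros; positivity
      _ = (r + 1) ^ l := by rw [add_pow]; simp
      _ ≤ (Real.exp r) ^ l := by gcongr; exact Real.add_one_le_exp r
      _ = Real.exp 1 ^ k := by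
          rw [← Real.exp_nat_mul, ← Real.exp_nat_mul, hr]
          congr 1
          field_simp
  have h2 : (Real.exp 1 * l / k) ^ k = Real.exp 1 ^ k / r ^ k := by
    rw [← div_pow, hr]; congr 1; field_simp
  rw [h2, le_div_iff₀ (by positivity)]
  exact h1

theorem sauer_bound_sparse_halfspaces (n k l : ℕ) (hk1 : 1 ≤ k) (hkn : k ≤ n)
    (U : Finset (Fin n → ℝ)) (hUl : U.card = l) (hkl : k ≤ l) :
    (({S : Set (Fin n → ℝ) | ∃ x : Fin n → ℝ, sparse n k x ∧ S = halfSpace n x ∩ (U : Set (Fin n → ℝ))}).ncard : ℝ)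
      ≤ (n.choose k : ℝ) * (Real.exp 1 * l / k) ^ k ∧
    (n.choose k : ℝ) * (Real.exp 1 * l / k) ^ k ≤ ((n : ℝ) * Real.exp 1 * l / k) ^ k := by
  classical
  constructor
  · have hsub : {S : Set (Fin n → ℝ) | ∃ x : Fin n → ℝ, sparse n k x ∧
        S = halfSpace n x ∩ (U : Set (Fin n → ℝ))} ⊆
        ((((Finset.univ : Finset (Fin n)).powersetCard k).biUnion fun T => sbhFam T U).image
          (fun S : Finset (Fin n → ℝ) => (S : Set (Fin n → ℝ))) :
            Finset (Set (Fin n → ℝ))) := by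
      rintro S ⟨x, ⟨s, hsk, hs⟩, rfl⟩
      obtain ⟨T, hsT, hT⟩ := Finset.exists_superset_card_eq hsk (by simpa using hkn)
      rw [Finset.mem_coe, Finset.mem_image]
      refine ⟨U.filter fun a => 0 ≤ ∑ i, a i * x i, ?_, ?_⟩
      · rw [Finset.mem_biUnion]
        refine ⟨T, by simp [Finset.mem_powersetCard, hT], ?_⟩
        unfold sbhFam
        rw [Finset.mem_filter]
        exact ⟨Finset.mem_powerset.2 (Finset.filter_subset _ _), x,
          fun i hi => hs i fun h => hi (hsT h), fun a => by simp⟩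
      · ext a
        simp [halfSpace, and_comm]
    have h1 := Set.ncard_le_ncard hsub (Finset.finite_toSet _)
    rw [Set.ncard_coe_finset] at h1
    have h2 : {S : Set (Fin n → ℝ) | ∃ x : Fin n → ℝ, sparse n k x ∧
        S = halfSpace n x ∩ (U : Set (Fin n → ℝ))}.ncard ≤
        n.choose k * ∑ j ∈ Finset.range (k + 1), l.choose j := by
      refine h1.trans (Finset.card_image_le.trans ?_)
      refine (Finset.card_biUnion_le_card_mul _ _
        (∑ j ∈ Finset.range (k + 1), l.choose j) ?_).trans_eq ?_
      · intro T hT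
        have := sbh_card T U
        rwa [(Finset.mem_powersetCard.1 hT).2, hUl] at this
      · simp [Finset.card_powersetCard]
    calc _ ≤ ((n.choose k * ∑ j ∈ Finset.range (k + 1), l.choose j : ℕ) : ℝ) := by
          exact_mod_cast h2
      _ = (n.choose k : ℝ) * ((∑ j ∈ Finset.range (k + 1), l.choose j : ℕ) : ℝ) := by
          rw [Nat.cast_mul]
      _ ≤ _ := mul_le_mul_of_nonneg_left (sbh_sum k l hk1 hkl) (by positivity)
  · have h : (n : ℝ) * Real.exp 1 * l / k = n * (Real.exp 1 * l / k) := by ring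
    rw [h, mul_pow]
    exact mul_le_mul_of_nonneg_right (by exact_mod_cast Nat.choose_le_pow n k) (by positivity)
end
end

section
/- Let n ≥ 1, let μ be the standard Gaussian measure on ℝ^n (the product of n copies of N(0,1)), and let x, x̂ ∈ ℝ^n with ‖x‖₂ = ‖x̂‖₂ = 1. Let α := inf over θ ∈ (0, 2π) of (2/π)·θ/(1 − cos θ). Then ‖x̂ − x‖₂² ≤ (4/α) · μ{ a ∈ ℝ^n : (⟨a, x̂⟩ ≥ 0) does not hold if and only if (⟨a, x⟩ ≥ 0) holds }, i.e., the squared Euclidean distance between x̂ and x is bounded by 4/α times the probability that a random Gaussian vector a is classified differently by the half-spaces determined by x̂ and by x. -/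
open Real MeasureTheory

noncomputable section

lemma aux_cf_real (c : ℝ) : ∫ x, Complex.exp (((c * x : ℝ) : ℂ) * Complex.I) ∂(ProbabilityTheory.gaussianReal 0 1) = Complex.exp (((-(c^2)/2 : ℝ)) : ℂ) := by
  have := ProbabilityTheory.charFun_gaussianReal (μ := 0) (v := 1) c
  rw [charFun_apply_real] at this
  push_cast
  rw [this]
  congr 1
  simp
  ring

lemma aux_cf_pi {n : ℕ} (c : Fin n → ℝ) :
    ∫ a, Complex.exp (((∑ i, c i * a i : ℝ) : ℂ) * Complex.I)
      ∂(Measure.pi fun _ : Fin n => ProbabilityTheory.gaussianReal 0 1)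
      = Complex.exp (((-(∑ i, c i ^ 2)/2 : ℝ)) : ℂ) := by
  have h : ∀ a : Fin n → ℝ, Complex.exp (((∑ i, c i * a i : ℝ) : ℂ) * Complex.I)
      = ∏ i, Complex.exp (((c i * a i : ℝ) : ℂ) * Complex.I) := by
    intro a
    rw [← Complex.exp_sum, Complex.ofReal_sum, Finset.sum_mul]
  simp_rw [h]
  rw [integral_fintype_prod_eq_prod (f := fun i x => Complex.exp (((c i * x : ℝ) : ℂ) * Complex.I))]
  simp_rw [aux_cf_real]
  rw [← Complex.exp_sum, ← Complex.ofReal_sum, ← Finset.sum_div, Finset.sum_neg_distrib]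

lemma aux_cf_prod (p q : ℝ) :
    ∫ a : ℝ × ℝ, Complex.exp (((p * a.1 + q * a.2 : ℝ) : ℂ) * Complex.I)
      ∂((ProbabilityTheory.gaussianReal 0 1).prod (ProbabilityTheory.gaussianReal 0 1))
      = Complex.exp (((-(p^2+q^2)/2 : ℝ)) : ℂ) := by
  have h : ∀ a : ℝ × ℝ, Complex.exp (((p * a.1 + q * a.2 : ℝ) : ℂ) * Complex.I)
      = Complex.exp (((p * a.1 : ℝ) : ℂ) * Complex.I) * Complex.exp (((q * a.2 : ℝ) : ℂ) * Complex.I) := by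
    intro a
    rw [← Complex.exp_add, Complex.ofReal_add, add_mul]
  simp_rw [h]
  rw [integral_prod_mul (fun x : ℝ => Complex.exp (((p * x : ℝ) : ℂ) * Complex.I))
    (fun x : ℝ => Complex.exp (((q * x : ℝ) : ℂ) * Complex.I)), aux_cf_real, aux_cf_real,
    ← Complex.exp_add, ← Complex.ofReal_add]
  congr 2
  ring

lemma aux_law {n : ℕ} (x y : Fin n → ℝ) (hx : ∑ i, x i ^ 2 = 1) (hy : ∑ i, y i ^ 2 = 1) (h : ℝ)
    (hxy : ∑ i, x i * y i = cos (2 * h)) :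
    (Measure.pi fun _ : Fin n => ProbabilityTheory.gaussianReal 0 1).map
      (fun a => (∑ i, a i * x i, ∑ i, a i * y i)) =
    ((ProbabilityTheory.gaussianReal 0 1).prod (ProbabilityTheory.gaussianReal 0 1)).map
      (fun a : ℝ × ℝ => (cos h * a.1 + sin h * a.2, cos h * a.1 - sin h * a.2)) := by
  have m1 : Measurable (fun a : Fin n → ℝ => (∑ i, a i * x i, ∑ i, a i * y i)) := by fun_prop
  have m2 : Measurable (fun a : ℝ × ℝ => (cos h * a.1 + sin h * a.2, cos h * a.1 - sin h * a.2)) := by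
    fun_prop
  have := Measure.isProbabilityMeasure_map (μ := Measure.pi fun _ : Fin n => ProbabilityTheory.gaussianReal 0 1) m1.aemeasurable
  have := Measure.isProbabilityMeasure_map (μ := (ProbabilityTheory.gaussianReal 0 1).prod (ProbabilityTheory.gaussianReal 0 1)) m2.aemeasurable
  apply Measure.ext_of_charFunDual
  ext L
  obtain ⟨p, q, hL⟩ : ∃ p q : ℝ, ∀ u v : ℝ, L (u, v) = u * p + v * q := by
    refine ⟨L (1, 0), L (0, 1), fun u v => ?_⟩
    have : ((u, v) : ℝ × ℝ) = u • (1, 0) + v • (0, 1) := by simp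
    rw [this, map_add, map_smul, map_smul]; simp
  have mL : Measurable fun v : ℝ × ℝ => Complex.exp ((L v : ℂ) * Complex.I) := by fun_prop
  rw [charFunDual_apply, charFunDual_apply, integral_map m1.aemeasurable mL.aestronglyMeasurable,
    integral_map m2.aemeasurable mL.aestronglyMeasurable]
  simp_rw [hL]
  have e1 := aux_cf_pi (fun i => p * x i + q * y i)
  have e2 := aux_cf_prod ((p + q) * cos h) ((p - q) * sin h)
  have f1 : ∀ a : Fin n → ℝ, (∑ i, a i * x i) * p + (∑ i, a i * y i) * q = ∑ i, (p * x i + q * y i) * a i := by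
    intro a
    rw [Finset.sum_mul, Finset.sum_mul, ← Finset.sum_add_distrib]
    exact Finset.sum_congr rfl fun i _ => by ring
  have f2 : ∀ a : ℝ × ℝ, (cos h * a.1 + sin h * a.2) * p + (cos h * a.1 - sin h * a.2) * q =
    ((p + q) * cos h) * a.1 + ((p - q) * sin h) * a.2 := by
    intro a; ring
  simp_rw [f1, f2]
  rw [e1, e2]
  congr 3
  have : ∑ i, (p * x i + q * y i) ^ 2 = p^2 * ∑ i, x i ^ 2 + q ^ 2 * ∑ i, y i ^ 2 + 2 * p * q * ∑ i, x i * y i := by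
    simp_rw [Finset.mul_sum]
    rw [← Finset.sum_add_distrib, ← Finset.sum_add_distrib]
    exact Finset.sum_congr rfl fun i _ => by ring
  rw [this, hx, hy, hxy, cos_two_mul]
  have := sin_sq h
  have h3 : ((p - q) * sin h)^2 = (p-q)^2 * (1 - cos h ^2) := by rw [mul_pow, this]
  rw [h3]; ring

def auxK : ENNReal := ∫⁻ r in Set.Ioi (0:ℝ), ENNReal.ofReal r * ENNReal.ofReal ((2*π)⁻¹ * exp (-r^2/2))

lemma aux_prod_eq (S : Set (ℝ × ℝ)) (hS : MeasurableSet S) :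
   ((ProbabilityTheory.gaussianReal 0 1).prod (ProbabilityTheory.gaussianReal 0 1)) S
    = ∫⁻ p in polarCoord.target, ENNReal.ofReal p.1 * 
      S.indicator (fun p => ENNReal.ofReal ((2*π)⁻¹ * exp (-(p.1^2 + p.2^2)/2))) (polarCoord.symm p) := by
  rw [ProbabilityTheory.gaussianReal_of_var_ne_zero _ one_ne_zero,
    prod_withDensity (by fun_prop) (by fun_prop), withDensity_apply _ hS]
  rw [← lintegral_indicator hS, ← Measure.volume_eq_prod, ← lintegral_comp_polarCoord_symm]
  congr! with p q
  simp only [ProbabilityTheory.gaussianPDF, ProbabilityTheory.gaussianPDFReal]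
  rw [← ENNReal.ofReal_mul (by positivity)]
  congr 1
  simp only [NNReal.coe_one, mul_one, sub_zero]
  rw [mul_mul_mul_comm, ← exp_add, ← mul_inv, mul_self_sqrt (by positivity)]
  congr 2
  ring

lemma aux_rect (C : Set ℝ) :
    ∫⁻ p in Set.Ioi (0:ℝ) ×ˢ C, ENNReal.ofReal p.1 * ENNReal.ofReal ((2*π)⁻¹ * exp (-p.1^2/2)) = auxK * volume C := by
  rw [Measure.volume_eq_prod, ← Measure.prod_restrict]
  have := lintegral_prod_mul (μ := volume.restrict (Set.Ioi (0:ℝ))) (ν := volume.restrict C)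
    (f := fun r => ENNReal.ofReal r * ENNReal.ofReal ((2*π)⁻¹ * exp (-r^2/2))) (g := fun _ => 1)
    (by fun_prop) (by fun_prop)
  simpa [auxK] using this

lemma aux_sq (p : ℝ × ℝ) : (polarCoord.symm p).1 ^ 2 + (polarCoord.symm p).2 ^ 2 = p.1 ^ 2 := by
  simp only [polarCoord_symm_apply]
  linear_combination p.1^2 * sin_sq_add_cos_sq p.2

lemma auxK_eq : auxK * ENNReal.ofReal (2 * π) = 1 := by
  have h := aux_prod_eq Set.univ MeasurableSet.univ
  simp only [measure_univ, Set.indicator_univ, aux_sq] at h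
  rw [h, polarCoord_target, aux_rect, volume_Ioo]
  congr 2; ring

lemma aux_plane (h : ℝ) (h0 : 0 ≤ h) (h1 : h ≤ π / 2) :
    ENNReal.ofReal (2 * h / π) ≤ ((ProbabilityTheory.gaussianReal 0 1).prod (ProbabilityTheory.gaussianReal 0 1))
      {a : ℝ × ℝ | ¬ (0 ≤ cos h * a.1 + sin h * a.2 ↔ 0 ≤ cos h * a.1 - sin h * a.2)} := by
  have hpi := pi_pos
  rw [aux_prod_eq _ (by measurability)]
  set C : Set ℝ := Set.Ioo (π/2 - h) (π/2 + h) ∪ Set.Ioo (-(π/2) - h) (-(π/2) + h) with hC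
  have hvol : volume C = ENNReal.ofReal (4 * h) := by
    rw [hC, measure_union _ measurableSet_Ioo, volume_Ioo, volume_Ioo, ← ENNReal.ofReal_add (by linarith) (by linarith)]
    · congr 1; ring
    · rw [Set.disjoint_left]
      rintro t ⟨a, b⟩ ⟨c, d⟩
      linarith
  have hsub : Set.Ioi (0:ℝ) ×ˢ C ⊆ polarCoord.target := by
    rw [polarCoord_target]
    apply Set.prod_mono le_rfl
    rintro t (⟨a, b⟩ | ⟨a, b⟩) <;> constructor <;> linarith
  have hK : ENNReal.ofReal (2 * h / π) = auxK * volume C := by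
    rw [hvol, show 4 * h = (2 * π) * (2 * h / π) by field_simp; ring, ENNReal.ofReal_mul (by positivity), ← mul_assoc, auxK_eq, one_mul]
  rw [hK, ← aux_rect]
  refine le_trans (le_of_eq ?_) (lintegral_mono_set hsub)
  refine setLIntegral_congr_fun (measurableSet_Ioi.prod (by measurability)) ?_
  rintro ⟨r, t⟩ ⟨hr, ht⟩
  simp only [Set.mem_Ioi] at hr
  dsimp only at ht ⊢
  rw [Set.indicator_of_mem, aux_sq]
  simp only [polarCoord_symm_apply, Set.mem_ofPred_eq]
  have e1 : cos h * (r * cos t) + sin h * (r * sin t) = r * cos (t - h) := by rw [cos_sub]; ring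
  have e2 : cos h * (r * cos t) - sin h * (r * sin t) = r * cos (t + h) := by rw [cos_add]; ring
  rw [e1, e2, mul_nonneg_iff_of_pos_left hr, mul_nonneg_iff_of_pos_left hr]
  rcases ht with ⟨a, b⟩ | ⟨a, b⟩
  · have c1 : 0 < cos (t - h) := cos_pos_of_mem_Ioo ⟨by linarith, by linarith⟩
    have c2 : cos (t + h) < 0 := cos_neg_of_pi_div_two_lt_of_lt (by linarith) (by linarith)
    intro hh; linarith [hh.1 c1.le]
  · have c1 : 0 < cos (t + h) := cos_pos_of_mem_Ioo ⟨by linarith, by linarith⟩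
    have c2 : cos (t - h) < 0 := by
      rw [← cos_neg]
      exact cos_neg_of_pi_div_two_lt_of_lt (by linarith) (by linarith)
    intro hh; linarith [hh.2 c1.le]

lemma aux_alpha_lb : ∀ b ∈ ((fun θ : ℝ => (2 / π) * θ / (1 - Real.cos θ)) '' Set.Ioo 0 (2 * π)), 2 / π ^ 2 ≤ b := by
  have hpi := pi_pos
  rintro _ ⟨θ, ⟨h0, h1⟩, rfl⟩
  have hc : cos θ < 1 := by
    refine lt_of_le_of_ne (cos_le_one _) fun h => ?_
    have := (cos_eq_one_iff_of_lt_of_lt (by linarith) h1).1 h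
    linarith
  have := one_sub_sq_div_two_le_cos (x := θ)
  dsimp only
  rw [div_le_div_iff₀ (by positivity) (by linarith)]
  have e : 2 / π * θ * π ^ 2 = 2 * θ * π := by field_simp
  rw [e]
  nlinarith

theorem dist_sq_le_generalization_error (n : ℕ) (hn : 1 ≤ n)
    (x xh : Fin n → ℝ) (hx : ∑ i, (x i) ^ 2 = 1) (hxh : ∑ i, (xh i) ^ 2 = 1) :
    ∑ i, (xh i - x i) ^ 2 ≤
      (4 / sInf ((fun θ : ℝ => (2 / π) * θ / (1 - Real.cos θ)) '' Set.Ioo 0 (2 * π))) *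
        ((Measure.pi fun _ : Fin n => ProbabilityTheory.gaussianReal 0 1)
          {a : Fin n → ℝ | ¬ ((0 ≤ ∑ i, a i * xh i) ↔ (0 ≤ ∑ i, a i * x i))}).toReal := by
  have hpi := pi_pos
  have hd : ∑ i, (xh i - x i) ^ 2 = 2 - 2 * ∑ i, xh i * x i := by
    have : ∑ i, (xh i - x i) ^ 2 = ∑ i, xh i ^ 2 + ∑ i, x i ^ 2 - 2 * ∑ i, xh i * x i := by
      rw [Finset.mul_sum, ← Finset.sum_add_distrib, ← Finset.sum_sub_distrib]
      exact Finset.sum_congr rfl fun i _ => by ring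
    rw [this, hx, hxh]; ring
  have hs : ∑ i, (xh i + x i) ^ 2 = 2 + 2 * ∑ i, xh i * x i := by
    have : ∑ i, (xh i + x i) ^ 2 = ∑ i, xh i ^ 2 + ∑ i, x i ^ 2 + 2 * ∑ i, xh i * x i := by
      rw [Finset.mul_sum, ← Finset.sum_add_distrib, ← Finset.sum_add_distrib]
      exact Finset.sum_congr rfl fun i _ => by ring
    rw [this, hx, hxh]; ring
  have hd0 : 0 ≤ ∑ i, (xh i - x i) ^ 2 := Finset.sum_nonneg fun i _ => sq_nonneg _
  have hs0 : 0 ≤ ∑ i, (xh i + x i) ^ 2 := Finset.sum_nonneg fun i _ => sq_nonneg _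
  rw [hd]
  set c := ∑ i, xh i * x i with hc
  set θ := arccos c with hθ
  have hcos : cos θ = c := cos_arccos (by linarith) (by linarith)
  have hθ0 : 0 ≤ θ := arccos_nonneg c
  have hθ1 : θ ≤ π := arccos_le_pi c
  have hP : ENNReal.ofReal (θ / π) ≤ (Measure.pi fun _ : Fin n => ProbabilityTheory.gaussianReal 0 1)
          {a : Fin n → ℝ | ¬ ((0 ≤ ∑ i, a i * xh i) ↔ (0 ≤ ∑ i, a i * x i))} := by
    have hl := aux_law xh x hxh hx (θ / 2) (by rw [← hc, ← hcos]; congr 1; ring)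
    have hS : MeasurableSet {p : ℝ × ℝ | ¬ (0 ≤ p.1 ↔ 0 ≤ p.2)} := by measurability
    have := congrArg (fun m => m {p : ℝ × ℝ | ¬ (0 ≤ p.1 ↔ 0 ≤ p.2)}) hl
    rw [Measure.map_apply (by fun_prop) hS, Measure.map_apply (by fun_prop) hS] at this
    have h2 := aux_plane (θ / 2) (by linarith) (by linarith)
    rw [show 2 * (θ / 2) / π = θ / π by ring] at h2
    exact h2.trans this.symm.le
  have hP' := ENNReal.toReal_mono (measure_ne_top _ _) hP
  rw [ENNReal.toReal_ofReal (by positivity)] at hP'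
  set α := sInf ((fun θ : ℝ => (2 / π) * θ / (1 - Real.cos θ)) '' Set.Ioo 0 (2 * π)) with hα
  have hα0 : 0 < α := lt_of_lt_of_le (by positivity : 0 < 2 / π ^ 2)
    (le_csInf (Set.Nonempty.image _ ⟨π, hpi, by linarith⟩) aux_alpha_lb)
  refine le_trans ?_ (mul_le_mul_of_nonneg_left hP' (by positivity))
  rcases hθ0.eq_or_lt with h | h
  · rw [← h, cos_zero] at hcos
    rw [← h, ← hcos]; simp
  · have hle : α ≤ (2 / π) * θ / (1 - Real.cos θ) :=
      csInf_le ⟨_, aux_alpha_lb⟩ ⟨θ, ⟨h, by linarith⟩, rfl⟩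
    have hc1 : 0 < 1 - cos θ := by
      have := cos_lt_cos_of_nonneg_of_le_pi le_rfl hθ1 h
      rw [cos_zero] at this; linarith
    rw [le_div_iff₀ hc1] at hle
    rw [← hcos, div_mul_eq_mul_div, le_div_iff₀ hα0]
    have e : 4 * (θ / π) = 2 * (2 / π * θ) := by ring
    rw [e]; nlinarith
end
end

section
/- For every real θ with 0 < θ < 2π, one has (2/π)·θ/(1 − cos θ) > 0.87856. -/
open Real

theorem gw_constant_bound (θ : ℝ) (h0 : 0 < θ) (h2 : θ < 2 * π) :
    0.87856 < (2 / π) * θ / (1 - Real.cos θ) := by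
  have hp1 := Real.pi_gt_d6
  have hp2 := Real.pi_lt_d6
  have hpos : 0 < 1 - Real.cos θ := by
    have h : Real.cos θ ≠ 1 := by
      intro h
      have := (Real.cos_eq_one_iff_of_lt_of_lt (by linarith) h2).1 h
      linarith
    have := lt_of_le_of_ne (Real.cos_le_one θ) h
    linarith
  rw [lt_div_iff₀ hpos]
  suffices H : 0.43928 * π * (1 - Real.cos θ) < θ by
    have e : 2 / π * θ = θ * (2 / π) := by ring
    rw [e, ← div_lt_iff₀ (by positivity)]
    calc _ = 0.43928 * π * (1 - Real.cos θ) := by field_simp; ring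
      _ < θ := H
  have hc : 0.43928 * π < 1.380039 := by linarith
  have H1 : 0.43928 * π * (1 - Real.cos θ) ≤ 1.380039 * (1 - Real.cos θ) :=
    mul_le_mul_of_nonneg_right hc.le hpos.le
  refine lt_of_le_of_lt H1 ?_
  rcases le_or_gt θ 1.4 with h | h
  · have := Real.one_sub_sq_div_two_le_cos (x := θ)
    nlinarith
  rcases le_or_gt θ (π / 2) with h' | h'
  · have := Real.cos_nonneg_of_neg_pi_div_two_le_of_le (by linarith) h'
    linarith
  rcases le_or_gt π θ with h3 | h3
  · have := Real.neg_one_le_cos θ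
    linarith
  obtain ⟨x, rfl⟩ : ∃ x, θ = x + (π / 2 + π / 4) := ⟨θ - (π / 2 + π / 4), by ring⟩
  have hx1 : -0.7854 < x := by linarith
  have hx2 : x < 0.7854 := by linarith
  have ec : Real.cos (x + (π / 2 + π / 4)) = -(√2 / 2) * (Real.cos x + Real.sin x) := by
    have : x + (π / 2 + π / 4) = (x + π / 4) + π / 2 := by ring
    rw [this, Real.cos_add_pi_div_two, Real.sin_add, Real.cos_pi_div_four, Real.sin_pi_div_four]
    ring
  rw [ec]
  have hax : |x| ≤ 1 := abs_le.2 ⟨by linarith, by linarith⟩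
  have c1 := (abs_le.1 (Real.cos_bound hax)).2
  have s1 := (abs_le.1 (Real.sin_bound hax)).2
  have a4 : |x| ^ 4 = x ^ 4 := by
    rw [show (4:ℕ) = 2 * 2 from rfl, pow_mul, sq_abs, ← pow_mul]
  have a5 : |x| ^ 5 ≤ x ^ 4 := by
    rw [pow_succ, a4]
    exact mul_le_of_le_one_right (by positivity) hax
  rw [a4] at c1
  have hS : Real.cos x + Real.sin x ≤ 1 + x - x ^ 2 / 2 - x ^ 3 / 6 + x ^ 4 * (5/96 + 1/100) := by
    linarith
  have hx2' : x ^ 2 ≤ 0.62 := by nlinarith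
  have hP : 0 ≤ 1 + x - x ^ 2 / 2 - x ^ 3 / 6 + x ^ 4 * (5/96 + 1/100) → 
      √2 / 2 * (Real.cos x + Real.sin x) ≤ 
      0.7071068 * (1 + x - x ^ 2 / 2 - x ^ 3 / 6 + x ^ 4 * (5/96 + 1/100)) := by
    intro hP
    have hs : √2 / 2 ≤ 0.7071068 := by
      have : √2 ≤ 1.4142136 := Real.sqrt_le_iff.2 ⟨by norm_num, by norm_num⟩
      linarith
    exact (mul_le_mul_of_nonneg_left hS (by positivity)).trans (mul_le_mul_of_nonneg_right hs hP)
  rcases le_or_gt 0 (1 + x - x ^ 2 / 2 - x ^ 3 / 6 + x ^ 4 * (5/96 + 1/100)) with h5 | h5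
  · have := hP h5
    have key : 1.380039 * (1 + 0.7071068 * (1 + x - x ^ 2 / 2 - x ^ 3 / 6 + x ^ 4 * (5/96 + 1/100)))
        < x + 3 / 4 * 3.141592 := by
      have x2 := sq_nonneg x
      have e3 : x ^ 3 = x ^ 2 * x := by ring
      have e4 : x ^ 4 = x ^ 2 * x ^ 2 := by ring
      rcases le_or_gt (-0.1) x with h6 | h6
      · rcases le_or_gt x 0.1 with h7 | h7
        · have b3 : x ^ 2 * (-0.1) ≤ x ^ 3 := by
            rw [e3]; exact mul_le_mul_of_nonneg_left h6 x2
          have b4 : x ^ 4 ≤ x ^ 2 * 0.01 := by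
            rw [e4]; exact mul_le_mul_of_nonneg_left (by nlinarith) x2
          have b2 := sq_nonneg (x + 0.0257)
          linarith
        · have b3 : 0 ≤ x ^ 3 := by positivity
          have b4 : x ^ 4 ≤ x ^ 2 * 0.62 := by
            rw [e4]; exact mul_le_mul_of_nonneg_left hx2' x2
          have b2 : 0 ≤ x * (0.7854 - x) := mul_nonneg (by linarith) (by linarith)
          linarith
      · have b3 : x ^ 2 * (-0.7854) ≤ x ^ 3 := by
          rw [e3]; exact mul_le_mul_of_nonneg_left hx1.le x2
        have b4 : x ^ 4 ≤ x ^ 2 * 0.62 := by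
          rw [e4]; exact mul_le_mul_of_nonneg_left hx2' x2
        have b2 : 0 ≤ (-0.1 - x) * (-x) := mul_nonneg (by linarith) (by linarith)
        linarith
    linarith
  · have : √2 / 2 * (Real.cos x + Real.sin x) ≤ 0 :=
      mul_nonpos_of_nonneg_of_nonpos (by positivity) (by linarith)
    linarith
end

section
/- Let (X, S) be a measurable space, P a probability measure on X, α ∈ [0, 1], and let P_N := P ⊗ B(α) be the product of P with the measure on {0,1} giving probability α to 1 and 1−α to 0. Then for all measurable sets T, F ⊆ X, the noisy generalization error satisfies J_N(T,F) = α + (1 − 2α)·P(T Δ F), where J_N(T,F) := ∫ | |1_T(c) − ω| − 1_F(c) | dP_N(c, ω). -/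
open Real MeasureTheory

noncomputable section

/-- The measure on `{0,1}` (modelled as `Bool`) giving probability `α` to `1` (`true`)
and `1 - α` to `0` (`false`). -/
def bern (α : ℝ) : Measure Bool :=
  α.toNNReal • Measure.dirac true + (1 - α).toNNReal • Measure.dirac false

theorem noisy_generalization_error_formula {X : Type*} [MeasurableSpace X]
    (P : Measure X) [IsProbabilityMeasure P]
    (α : ℝ) (hα : α ∈ Set.Icc (0 : ℝ) 1)
    (T F : Set X) (hT : MeasurableSet T) (hF : MeasurableSet F) :
    (∫ p : X × Bool,
        |(|T.indicator (fun _ => (1 : ℝ)) p.1 - (if p.2 then (1 : ℝ) else 0)|) -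
          F.indicator (fun _ => (1 : ℝ)) p.1| ∂(P.prod (bern α)))
      = α + (1 - 2 * α) * (P (symmDiff T F)).toReal := by
  obtain ⟨h0, h1⟩ := hα
  haveI : IsFiniteMeasure (bern α) := by unfold bern; infer_instance
  have hD : MeasurableSet (symmDiff T F) := hT.symmDiff hF
  have hpt : ∀ p : X × Bool,
      |(|T.indicator (fun _ => (1 : ℝ)) p.1 - (if p.2 then (1 : ℝ) else 0)|) -
          F.indicator (fun _ => (1 : ℝ)) p.1|
        = if p.2 then 1 - (symmDiff T F).indicator (fun _ => (1 : ℝ)) p.1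
          else (symmDiff T F).indicator (fun _ => (1 : ℝ)) p.1 := by
    rintro ⟨x, b⟩
    by_cases hxT : x ∈ T <;> by_cases hxF : x ∈ F <;> cases b <;>
      simp [Set.indicator, Set.mem_symmDiff, hxT, hxF]
  simp_rw [hpt]
  have hm : Measurable (fun x => (symmDiff T F).indicator (fun _ => (1 : ℝ)) x) :=
    measurable_const.indicator hD
  have hi : Integrable (fun x => (symmDiff T F).indicator (fun _ => (1 : ℝ)) x) P :=
    (integrable_const 1).indicator hD
  rw [integral_prod]
  · have inner : ∀ x : X, (∫ b : Bool, (if b then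
          1 - (symmDiff T F).indicator (fun _ => (1 : ℝ)) x
          else (symmDiff T F).indicator (fun _ => (1 : ℝ)) x) ∂(bern α))
        = α + (1 - 2 * α) * (symmDiff T F).indicator (fun _ => (1 : ℝ)) x := by
      intro x
      unfold bern
      rw [integral_add_measure Integrable.of_finite Integrable.of_finite,
        integral_smul_nnreal_measure, integral_smul_nnreal_measure,
        integral_dirac, integral_dirac]
      simp only [NNReal.smul_def, Real.coe_toNNReal α h0,
        Real.coe_toNNReal (1 - α) (by linarith), smul_eq_mul]
      simp
      ring
    simp_rw [inner]
    rw [integral_add (integrable_const _) (hi.const_mul _), integral_const_mul,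
      integral_indicator_const _ hD]
    simp [Measure.real]
  · refine Integrable.of_bound (C := 1) ?_ ?_
    · refine Measurable.aestronglyMeasurable ?_
      refine Measurable.ite ?_ ?_ ?_
      · exact measurable_snd (measurableSet_singleton true)
      · exact measurable_const.sub (hm.comp measurable_fst)
      · exact hm.comp measurable_fst
    · refine Filter.Eventually.of_forall ?_
      rintro ⟨x, b⟩
      by_cases hx : x ∈ symmDiff T F <;> cases b <;> simp [Set.indicator, hx]
end
end

section
/- Let n ≥ 2 and 1 ≤ k ≤ n be integers, let P be any probability measure on ℝ^n (with the Borel σ-algebra), and let x ∈ Σ_k be a k-sparse vector. Let d := ⌊2k·lg(ne)⌋, and let ε, δ ∈ (0,1) and m ≥ max{ (8d/ε)·lg(8e/ε), (4/ε)·lg(2/δ) }. Draw a_1, …, a_m independently from P. Then with P^m-outer measure at most δ, the following bad event occurs: there exists a k-sparse vector x̂ ∈ Σ_k such that (⟨a_i, x̂⟩ ≥ 0 if and only if ⟨a_i, x⟩ ≥ 0) for all i = 1, …, m, yet P{ a ∈ ℝ^n : (⟨a, x̂⟩ ≥ 0) does not hold if and only if (⟨a, x⟩ ≥ 0) holds }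 > ε. Equivalently, with probability at least 1 − δ, every k-sparse x̂ consistent with the sign measurements of x has generalization error J(H(x̂), H(x)) = P(H(x̂) Δ H(x)) at most ε. -/
open Real MeasureTheory

noncomputable section

theorem sum_choose_le (N k : ℕ) : ∑ i ∈ Finset.Iic k, N.choose i ≤ (N+1)^k := by
  have : Finset.Iic k = Finset.range (k+1) := by ext; simp
  rw [this]
  clear this
  induction k with
  | zero => simp
  | succ k ih =>
    rw [Finset.sum_range_succ]
    have h1 : N.choose (k+1) ≤ N^(k+1) := Nat.choose_le_pow N (k+1)
    have h2 : N^(k+1) ≤ N * (N+1)^k := by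
      rw [pow_succ, mul_comm]; gcongr; omega
    calc _ ≤ (N+1)^k + N * (N+1)^k := by gcongr; exact h1.trans h2
      _ = _ := by ring

open Classical in
theorem vc_count {ι : Type*} [Fintype ι] (k : ℕ) (b : ι → Fin k → ℝ) :
    (Finset.univ.filter (fun S : Finset ι => ∃ c : Fin k → ℝ, ∀ i, i ∈ S ↔ 0 ≤ ∑ l, b i l * c l)).card
      ≤ (Fintype.card ι + 1)^k := by
  set A := (Finset.univ.filter (fun S : Finset ι => ∃ c : Fin k → ℝ, ∀ i, i ∈ S ↔ 0 ≤ ∑ l, b i l * c l)) with hA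
  have hvc : A.vcDim ≤ k := by
    unfold Finset.vcDim
    apply Finset.sup_le
    intro S hS
    rw [Finset.mem_shatterer] at hS
    by_contra hlt
    push Not at hlt
    have hdep : ¬ LinearIndependent ℝ (fun i : S => b i) := by
      intro h
      have := h.fintype_card_le_finrank
      simp at this
      omega
    rw [Fintype.not_linearIndependent_iff] at hdep
    obtain ⟨g, hg, i0, hi0⟩ := hdep
    have key : ∀ g : S → ℝ, ∑ i, g i • b i = 0 → ∀ i, ¬ g i < 0 := by
      intro g hg i hi
      have := hS (t := S.filter (fun i => ∃ h : i ∈ S, 0 ≤ g ⟨i, h⟩)) (Finset.filter_subset _ _)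
      obtain ⟨u, hu, hut⟩ := this
      rw [hA, Finset.mem_filter] at hu
      obtain ⟨-, c, hc⟩ := hu
      have h1 : ∀ i : S, 0 ≤ g i ↔ 0 ≤ ∑ l, b i l * c l := by
        intro i
        rw [← hc]
        have := congrArg (fun X => (i : ι) ∈ X) hut
        simp at this
        exact this.symm
      have h0 : ∑ i, g i * ∑ l, b i l * c l = 0 := by
        have : ∑ l, (∑ i, g i • b i) l * c l = 0 := by rw [hg]; simp
        rw [← this]
        simp only [Finset.mul_sum, Finset.sum_apply, Pi.smul_apply, smul_eq_mul, Finset.sum_mul]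
        rw [Finset.sum_comm]
        simp only [mul_assoc]
      have hpos : 0 < ∑ i, g i * ∑ l, b i l * c l := by
        apply Finset.sum_pos'
        · intro j _
          by_cases hj : 0 ≤ g j
          · exact mul_nonneg hj ((h1 j).1 hj)
          · have := mt (h1 j).2 hj
            push Not at hj this
            exact (mul_pos_of_neg_of_neg hj this).le
        · refine ⟨i, Finset.mem_univ _, ?_⟩
          have := mt (h1 i).2 (not_le.2 hi)
          push Not at this
          exact (mul_pos_of_neg_of_neg hi this)
      linarith
    rcases lt_or_gt_of_ne hi0 with h | h
    · exact key g hg i0 h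
    · exact key (-g) (by simpa using hg) i0 (by simpa using h)
  calc A.card ≤ A.shatterer.card := Finset.card_le_card_shatterer A
    _ ≤ ∑ i ∈ Finset.Iic A.vcDim, (Fintype.card ι).choose i := Finset.card_shatterer_le_sum_vcDim
    _ ≤ ∑ i ∈ Finset.Iic k, (Fintype.card ι).choose i := by
        apply Finset.sum_le_sum_of_subset
        intro i; simp; omega
    _ ≤ _ := sum_choose_le _ _

open Classical in
theorem swap_count (m r : ℕ) (e1 e2 : Fin m → Prop) :
    (Finset.univ.filter (fun σ : Fin m → Bool => (∀ i, ¬ (if σ i then e2 i else e1 i)) ∧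
      r ≤ (Finset.univ.filter (fun i => if σ i then e1 i else e2 i)).card)).card * 2^r ≤ 2^m := by
  set V := (Finset.univ.filter (fun σ : Fin m → Bool => (∀ i, ¬ (if σ i then e2 i else e1 i)) ∧
      r ≤ (Finset.univ.filter (fun i => if σ i then e1 i else e2 i)).card)) with hV
  rcases V.eq_empty_or_nonempty with h | ⟨σ0, h0⟩
  · simp [h]
  set I := Finset.univ.filter (fun i => e1 i ∨ e2 i) with hI
  have hr : r ≤ I.card := by
    rw [hV, Finset.mem_filter] at h0
    refine h0.2.2.trans (Finset.card_le_card ?_)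
    intro i; simp [hI]; split_ifs <;> tauto
  have hag : ∀ σ ∈ V, ∀ i ∈ I, σ i = σ0 i := by
    intro σ hσ i hi
    rw [hV, Finset.mem_filter] at h0 hσ
    have a := h0.2.1 i
    have b := hσ.2.1 i
    simp [hI] at hi
    cases h1 : σ i <;> cases h2 : σ0 i <;> simp_all
  have : (V ×ˢ (Finset.univ : Finset (I → Bool))).card ≤ (Finset.univ : Finset (Fin m → Bool)).card := by
    apply Finset.card_le_card_of_injOn (fun p i => if h : i ∈ I then p.2 ⟨i, h⟩ else p.1 i)
    · intro _ _; simp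
    · rintro ⟨σ, τ⟩ hp ⟨σ', τ'⟩ hp' heq
      simp at hp hp'
      ext i
      · by_cases hi : i ∈ I
        · exact (hag σ hp i hi).trans (hag σ' hp' i hi).symm
        · have := congrFun heq i
          simp [hi] at this
          simp [this]
      · have := congrFun heq i
        simp at this
        simp [this]
  rw [Finset.card_product] at this
  simp at this
  refine le_trans ?_ this
  gcongr
  · norm_num

open Classical in
theorem sparse_count {ι : Type*} [Fintype ι] (n k : ℕ) (hkn : k ≤ n) (z : ι → Fin n → ℝ) :
    (Finset.univ.filter (fun S : Finset ι => ∃ xh : Fin n → ℝ, sparse n k xh ∧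
      ∀ i, i ∈ S ↔ 0 ≤ ∑ j, z i j * xh j)).card
      ≤ (n * (Fintype.card ι + 1))^k := by
  calc _ ≤ ((Finset.univ : Finset (Fin k → Fin n)).biUnion (fun f =>
      Finset.univ.filter (fun S : Finset ι => ∃ c : Fin k → ℝ,
        ∀ i, i ∈ S ↔ 0 ≤ ∑ l, (fun i l => z i (f l)) i l * c l))).card := by
        apply Finset.card_le_card
        intro S hS
        simp only [Finset.mem_filter, Finset.mem_univ, true_and, Finset.mem_biUnion] at hS ⊢
        obtain ⟨xh, ⟨s, hs, hs0⟩, h⟩ := hS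
        obtain ⟨t, hst, ht⟩ := Finset.exists_superset_card_eq hs (by simpa using hkn)
        refine ⟨t.orderEmbOfFin ht, fun l => xh (t.orderEmbOfFin ht l), ?_⟩
        intro i
        rw [h i]
        have : ∑ j, z i j * xh j = ∑ j ∈ t, z i j * xh j := by
          symm
          apply Finset.sum_subset (Finset.subset_univ _)
          intro j _ hj
          rw [hs0 j (fun h => hj (hst h)), mul_zero]
        rw [this]
        have h2 : t = Finset.univ.map (t.orderEmbOfFin ht).toEmbedding := by
          simp
        conv_lhs => rw [h2]
        rw [Finset.sum_map]
        rfl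
    _ ≤ ∑ f : Fin k → Fin n, (Fintype.card ι + 1)^k := by
        refine Finset.card_biUnion_le.trans (Finset.sum_le_sum fun f _ => vc_count k _)
    _ = _ := by simp [mul_pow]

theorem isClosed_sparse (n k : ℕ) : IsClosed {x | sparse n k x} := by
  have : {x | sparse n k x} = ⋃ s : {s : Finset (Fin n) // s.card ≤ k},
      ⋂ i : {i // i ∉ s.1}, {x : Fin n → ℝ | x i = 0} := by
    ext x; simp [sparse]
  rw [this]
  refine isClosed_iUnion_of_finite fun s => isClosed_iInter fun i => ?_
  exact isClosed_eq (by fun_prop) (by fun_prop)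

theorem meas_pattern {ι : Type*} [Fintype ι] (n k : ℕ) (S : Finset ι) :
    MeasurableSet {z : ι → Fin n → ℝ | ∃ xh : Fin n → ℝ, sparse n k xh ∧
      ∀ i, i ∈ S ↔ 0 ≤ ∑ j, z i j * xh j} := by
  let K : ℕ → Set (Fin n → ℝ) := fun R => {x | sparse n k x} ∩ Set.pi Set.univ (fun _ => Set.Icc (-(R:ℝ)) R)
  have hK : ∀ R, IsCompact (K R) := fun R =>
    (isCompact_univ_pi fun _ => isCompact_Icc).inter_left (isClosed_sparse n k)
  have heq : {z : ι → Fin n → ℝ | ∃ xh : Fin n → ℝ, sparse n k xh ∧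
      ∀ i, i ∈ S ↔ 0 ≤ ∑ j, z i j * xh j} = ⋃ R : ℕ, Prod.snd ''
        {p : K R × (ι → Fin n → ℝ) | (∀ i ∈ S, 0 ≤ ∑ j, p.2 i j * p.1.1 j) ∧
          ∀ i ∉ S, ∑ j, p.2 i j * p.1.1 j ≤ - (1 / ((R:ℝ) + 1))} := by
    ext z
    simp only [Set.mem_ofPred_eq, Set.mem_iUnion, Set.mem_image, Prod.exists, exists_eq_right]
    constructor
    · rintro ⟨xh, hs, h⟩
      have e1 : ∀ᶠ R : ℕ in Filter.atTop, ∀ j, |xh j| ≤ R := by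
        rw [Filter.eventually_all]
        intro j
        exact (tendsto_natCast_atTop_atTop (R := ℝ)).eventually_ge_atTop _
      have e2 : ∀ᶠ R : ℕ in Filter.atTop, ∀ i, i ∉ S → ∑ j, z i j * xh j ≤ - (1 / ((R:ℝ) + 1)) := by
        rw [Filter.eventually_all]
        intro i
        by_cases hi : i ∈ S
        · simp [hi]
        · have h1 : 0 < - ∑ j, z i j * xh j := by
            have := mt (h i).2 hi
            linarith
          filter_upwards [(tendsto_one_div_add_atTop_nhds_zero_nat (𝕜 := ℝ)).eventually_lt_const h1] with R hR _
          linarith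
      obtain ⟨R, h1, h2⟩ := (e1.and e2).exists
      refine ⟨R, ⟨xh, hs, fun j _ => abs_le.1 (h1 j)⟩, fun i hi => (h i).1 hi, h2⟩
    · rintro ⟨R, xh, h1, h2⟩
      refine ⟨xh.1, xh.2.1, fun i => ⟨h1 i, fun h => ?_⟩⟩
      by_contra hi
      have := h2 i hi
      have : 0 < 1 / ((R:ℝ) + 1) := by positivity
      linarith
  rw [heq]
  refine MeasurableSet.iUnion fun R => IsClosed.measurableSet ?_
  have := isCompact_iff_compactSpace.1 (hK R)
  refine isClosedMap_snd_of_compactSpace _ ?_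
  simp only [Set.ofPred_and, Set.ofPred_forall]
  have hc : ∀ i, Continuous fun p : K R × (ι → Fin n → ℝ) => ∑ j, p.2 i j * p.1.1 j := by
    intro i
    refine continuous_finsetSum _ fun j _ => Continuous.mul (by fun_prop) ?_
    exact (continuous_apply j).comp (continuous_subtype_val.comp continuous_fst)
  refine IsClosed.inter (isClosed_iInter fun i => isClosed_iInter fun _ => ?_) (isClosed_iInter fun i => isClosed_iInter fun _ => ?_)
  · exact isClosed_le continuous_const (hc i)
  · exact isClosed_le (hc i) continuous_const

def err {n : ℕ} (x xh v : Fin n → ℝ) : Prop :=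
  ¬ ((0 ≤ ∑ j, v j * xh j) ↔ (0 ≤ ∑ j, v j * x j))

theorem meas_err {n : ℕ} (x xh : Fin n → ℝ) : MeasurableSet {v | err x xh v} := by
  unfold err
  have h : ∀ y : Fin n → ℝ, MeasurableSet {v : Fin n → ℝ | 0 ≤ ∑ j, v j * y j} := fun y =>
    measurableSet_le (by fun_prop) (by fun_prop)
  exact ((h xh).iff (h x)).compl

open Classical in
def Bad (n k m r : ℕ) (x : Fin n → ℝ) : Set (Fin m → (Fin n → ℝ) × (Fin n → ℝ)) :=
  {c | ∃ xh, sparse n k xh ∧ (∀ i, ¬ err x xh (c i).1) ∧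
    r ≤ (Finset.univ.filter fun i => err x xh (c i).2).card}

def pts {n m : ℕ} (c : Fin m → (Fin n → ℝ) × (Fin n → ℝ)) (p : Fin m × Bool) : Fin n → ℝ :=
  if p.2 then (c p.1).2 else (c p.1).1

theorem pts_t {n m : ℕ} (c : Fin m → (Fin n → ℝ) × (Fin n → ℝ)) (i : Fin m) : pts c (i, true) = (c i).2 := by
  simp [pts]

theorem pts_f {n m : ℕ} (c : Fin m → (Fin n → ℝ) × (Fin n → ℝ)) (i : Fin m) : pts c (i, false) = (c i).1 := by
  simp [pts]

open Classical in
theorem meas_Bad (n k m r : ℕ) (x : Fin n → ℝ) : MeasurableSet (Bad n k m r x) := by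
  have hp : Measurable (pts : (Fin m → (Fin n → ℝ) × (Fin n → ℝ)) → Fin m × Bool → Fin n → ℝ) := by
    rw [measurable_pi_iff]
    rintro ⟨i, b⟩
    cases b <;> simp [pts] <;> fun_prop
  have : Bad n k m r x = ⋃ S : Finset (Fin m × Bool), ⋃ T : Finset (Fin m × Bool),
      {c | (∀ i, (i, false) ∈ S ↔ (i, false) ∈ T) ∧
        r ≤ (Finset.univ.filter fun i : Fin m => ¬ ((i, true) ∈ S ↔ (i, true) ∈ T)).card} ∩
      (pts ⁻¹' {z | ∃ xh : Fin n → ℝ, sparse n k xh ∧ ∀ i, i ∈ S ↔ 0 ≤ ∑ j, z i j * xh j} ∩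
        ⋂ i, {c | i ∈ T ↔ 0 ≤ ∑ j, pts c i j * x j}) := by
    ext c
    simp only [Set.mem_iUnion, Set.mem_inter_iff, Set.mem_ofPred_eq, Set.mem_preimage, Set.mem_iInter]
    constructor
    · rintro ⟨xh, hs, h1, h2⟩
      refine ⟨Finset.univ.filter (fun i => 0 ≤ ∑ j, pts c i j * xh j),
        Finset.univ.filter (fun i => 0 ≤ ∑ j, pts c i j * x j), ⟨?_, ?_⟩, ⟨xh, hs, ?_⟩, ?_⟩
      · intro i
        have := h1 i
        simp only [err, not_not] at this
        simp only [Finset.mem_filter, Finset.mem_univ, true_and, pts_f]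
        exact this
      · refine h2.trans (Finset.card_le_card fun i hi => ?_)
        simp only [Finset.mem_filter, Finset.mem_univ, true_and, pts_t] at hi ⊢
        exact hi
      · simp
      · simp
    · rintro ⟨S, T, ⟨h1, h2⟩, ⟨xh, hs, h3⟩, h4⟩
      refine ⟨xh, hs, ?_, ?_⟩
      · intro i
        have := h1 i
        rw [h3, h4] at this
        simpa [err, pts] using this
      · refine h2.trans (Finset.card_le_card fun i hi => ?_)
        simp only [Finset.mem_filter, Finset.mem_univ, true_and] at hi ⊢
        rw [h3, h4, pts_t] at hi
        exact hi
  rw [this]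
  refine MeasurableSet.iUnion fun S => MeasurableSet.iUnion fun T => ?_
  refine (MeasurableSet.const _).inter ((hp (meas_pattern n k S)).inter (MeasurableSet.iInter fun i => ?_))
  have : Measurable fun c : Fin m → (Fin n → ℝ) × (Fin n → ℝ) => ∑ j, pts c i j * x j := by
    have h : Measurable fun z : Fin m × Bool → Fin n → ℝ => ∑ j, z i j * x j := by fun_prop
    exact h.comp hp
  exact (MeasurableSet.const _).iff (measurableSet_le measurable_const this)

def swp {n m : ℕ} (σ : Fin m → Bool) (c : Fin m → (Fin n → ℝ) × (Fin n → ℝ)) :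
    Fin m → (Fin n → ℝ) × (Fin n → ℝ) := fun i => if σ i then (c i).swap else c i

theorem swp_mp {n m : ℕ} (σ : Fin m → Bool) (P : Measure (Fin n → ℝ)) [IsProbabilityMeasure P] :
    MeasurePreserving (swp σ) (Measure.pi fun _ : Fin m => P.prod P) (Measure.pi fun _ : Fin m => P.prod P) := by
  apply measurePreserving_pi (fun _ : Fin m => P.prod P) (fun _ : Fin m => P.prod P)
    (f := fun i y => if σ i then y.swap else y)
  intro i
  cases σ i
  · simpa using! MeasurePreserving.id (P.prod P)
  · simpa using Measure.measurePreserving_swap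

open Classical in
theorem swp_count (n k m r : ℕ) (hkn : k ≤ n) (x : Fin n → ℝ) (c : Fin m → (Fin n → ℝ) × (Fin n → ℝ)) :
    (Finset.univ.filter (fun σ => swp σ c ∈ Bad n k m r x)).card * 2^r ≤ (n * (2*m+1))^k * 2^m := by
  set Pt := (Finset.univ.filter (fun S : Finset (Fin m × Bool) => ∃ xh : Fin n → ℝ, sparse n k xh ∧
      ∀ i, i ∈ S ↔ 0 ≤ ∑ j, pts c i j * xh j)) with hPt
  have hPc : Pt.card ≤ (n * (2*m+1))^k := by
    have := sparse_count n k hkn (pts c)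
    rw [Fintype.card_prod, Fintype.card_fin, Fintype.card_bool, mul_comm m 2] at this
    exact this
  let e : Finset (Fin m × Bool) → Bool → Fin m → Prop := fun S b i =>
    ¬ ((i, b) ∈ S ↔ 0 ≤ ∑ j, pts c (i,b) j * x j)
  have hsub : (Finset.univ.filter (fun σ => swp σ c ∈ Bad n k m r x)) ⊆ Pt.biUnion (fun S =>
      (Finset.univ.filter (fun σ : Fin m → Bool => (∀ i, ¬ (if σ i then e S true i else e S false i)) ∧
      r ≤ (Finset.univ.filter (fun i => if σ i then e S false i else e S true i)).card))) := by
    intro σ hσ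
    simp only [Finset.mem_filter, Finset.mem_univ, true_and, Finset.mem_biUnion] at hσ ⊢
    obtain ⟨xh, hs, h1, h2⟩ := hσ
    refine ⟨Finset.univ.filter (fun i => 0 ≤ ∑ j, pts c i j * xh j), ?_, ?_, ?_⟩
    · rw [hPt]; simp only [Finset.mem_filter, Finset.mem_univ, true_and]
      exact ⟨xh, hs, fun i => Iff.rfl⟩
    · intro i
      have := h1 i
      simp only [e, Finset.mem_filter, Finset.mem_univ, true_and, pts_t, pts_f]
      cases h : σ i <;> simpa [h, swp, err] using this
    · refine h2.trans (Finset.card_le_card ?_)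
      intro i hi
      rw [Finset.mem_filter] at hi ⊢
      refine ⟨Finset.mem_univ _, ?_⟩
      have := hi.2
      simp only [e, Finset.mem_filter, Finset.mem_univ, true_and, pts_t, pts_f]
      cases h : σ i <;> simpa [h, swp, err] using this
  have h5 := (Finset.card_le_card hsub).trans Finset.card_biUnion_le
  refine (Nat.mul_le_mul_right (2^r) h5).trans ?_
  rw [Finset.sum_mul]
  refine (Finset.sum_le_sum (g := fun _ => 2^m) fun S _ => ?_).trans ?_
  · refine le_trans (le_of_eq ?_) (swap_count m r (e S false) (e S true))
    congr!
  rw [Finset.sum_const, smul_eq_mul]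
  exact Nat.mul_le_mul_right _ hPc

theorem Bad_le (n k m r : ℕ) (hkn : k ≤ n) (x : Fin n → ℝ) (P : Measure (Fin n → ℝ)) [IsProbabilityMeasure P] :
    (Measure.pi fun _ : Fin m => P.prod P) (Bad n k m r x) * 2^r ≤ ((n * (2*m+1))^k : ℕ) := by
  classical
  set μ := (Measure.pi fun _ : Fin m => P.prod P) with hμ
  have hB := meas_Bad n k m r x
  have h1 : ∑ σ : Fin m → Bool, μ (swp σ ⁻¹' Bad n k m r x) = 2^m * μ (Bad n k m r x) := by
    rw [Finset.sum_congr rfl fun σ _ => (swp_mp σ P).measure_preimage hB.nullMeasurableSet]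
    simp [hμ]
  have h2 : ∑ σ : Fin m → Bool, μ (swp σ ⁻¹' Bad n k m r x)
      = ∫⁻ c, ((Finset.univ.filter (fun σ => swp σ c ∈ Bad n k m r x)).card : ENNReal) ∂μ := by
    have : ∀ σ : Fin m → Bool, μ (swp σ ⁻¹' Bad n k m r x)
      = ∫⁻ c, (swp σ ⁻¹' Bad n k m r x).indicator 1 c ∂μ := fun σ => by
        rw [lintegral_indicator_one ((swp_mp σ P).measurable hB)]
    simp_rw [this]
    rw [← lintegral_finsetSum]
    · congr 1; ext c
      simp [Set.indicator_apply, Finset.sum_boole]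
    · intro σ _
      exact measurable_one.indicator ((swp_mp σ P).measurable hB)
  have h3 : (∫⁻ c, ((Finset.univ.filter (fun σ => swp σ c ∈ Bad n k m r x)).card : ENNReal) ∂μ) * 2^r
      ≤ ((n * (2*m+1))^k : ℕ) * 2^m := by
    rw [← lintegral_mul_const' _ _ (by finiteness)]
    calc _ ≤ ∫⁻ c, (((n * (2*m+1))^k : ℕ) * 2^m : ENNReal) ∂μ := by
          apply lintegral_mono
          intro c
          have := swp_count n k m r hkn x c
          beta_reduce
          exact_mod_cast this
      _ = _ := by simp
  rw [← h2, h1, mul_comm _ ((2:ENNReal)^m), mul_assoc] at h3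
  exact (ENNReal.mul_le_mul_iff_right (by simp) (by finiteness)).1 h3

open Classical in
theorem ghost {E : Type*} [MeasurableSpace E] (P : Measure E) [IsProbabilityMeasure P] (A : Set E)
    (hA : MeasurableSet A) (m : ℕ) (ε : ℝ) (hp : ε ≤ P.real A) (hm : 16 ≤ ε * m / 2) :
    2⁻¹ ≤ (Measure.pi fun _ : Fin m => P)
      {b | ⌈ε * m / 2⌉₊ ≤ (Finset.univ.filter fun i => b i ∈ A).card} := by
  set μ := Measure.pi fun _ : Fin m => P with hμ
  set y := ε * m / 2 with hy
  let f : E → ℝ := fun v => 1 - A.indicator (fun _ => (1/2 : ℝ)) v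
  have hf : Measurable f := measurable_const.sub (measurable_const.indicator hA)
  have hfA : ∀ v, f v = if v ∈ A then 1/2 else 1 := by
    intro v; by_cases h : v ∈ A <;> simp [f, h]; norm_num
  have hF : ∀ b : Fin m → E, ∏ i, f (b i) = (1/2 : ℝ)^((Finset.univ.filter fun i => b i ∈ A).card) := by
    intro b
    simp_rw [hfA]
    rw [Finset.prod_ite]; simp
  have hFm : Measurable fun b : Fin m → E => ∏ i, f (b i) :=
    Finset.measurable_prod _ fun i _ => hf.comp (measurable_pi_apply i)
  have hint : ∫ v, f v ∂P = 1 - P.real A / 2 := by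
    rw [integral_sub (integrable_const _) ((integrable_const _).indicator hA)]
    rw [integral_indicator hA]
    simp; ring
  have hI : ∫ b, ∏ i, f (b i) ∂μ = (1 - P.real A / 2)^m := by
    rw [hμ, integral_fintype_prod_eq_pow, hint, Fintype.card_fin]
  have hI2 : (1 - P.real A / 2)^m ≤ Real.exp (-y) := by
    have h1 : P.real A ≤ 1 := measureReal_le_one
    calc (1 - P.real A / 2)^m ≤ (Real.exp (-(P.real A / 2)))^m := by
          apply pow_le_pow_left₀ (by linarith)
          have := Real.add_one_le_exp (-(P.real A / 2)); linarith
      _ = Real.exp (m * (-(P.real A / 2))) := by rw [← Real.exp_nat_mul]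
      _ ≤ _ := by
        apply Real.exp_le_exp.2
        rw [hy]
        have : (0:ℝ) ≤ m := by positivity
        nlinarith
  have hmk := mul_meas_ge_le_integral_of_nonneg (μ := μ) (f := fun b : Fin m → E => ∏ i, f (b i))
    (Filter.Eventually.of_forall fun b => by simp only [hF]; positivity)
    (Integrable.of_bound hFm.aestronglyMeasurable 1 (Filter.Eventually.of_forall fun b => by
      rw [hF, Real.norm_of_nonneg (by positivity)]; exact pow_le_one₀ (by norm_num) (by norm_num)))
    (Real.exp (- y * Real.log 2))
  rw [hI] at hmk
  set G := {b : Fin m → E | ⌈y⌉₊ ≤ (Finset.univ.filter fun i => b i ∈ A).card} with hG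
  have hGm : MeasurableSet G := by
    have : Measurable fun b : Fin m → E => (Finset.univ.filter fun i => b i ∈ A).card := by
      simp_rw [Finset.card_filter]
      refine Finset.measurable_sum _ fun i _ => ?_
      exact Measurable.ite (measurable_pi_apply i hA) measurable_const measurable_const
    exact measurableSet_le measurable_const this
  have hsub : Gᶜ ⊆ {b | Real.exp (- y * Real.log 2) ≤ ∏ i, f (b i)} := by
    intro b hb
    have hb' : ¬ (⌈y⌉₊ ≤ (Finset.univ.filter fun i => b i ∈ A).card) := hb
    rw [not_le, Nat.lt_ceil] at hb'
    change Real.exp (- y * Real.log 2) ≤ ∏ i, f (b i)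
    rw [hF, one_div, inv_pow, ← Real.rpow_natCast, ← Real.rpow_neg (by norm_num),
      Real.rpow_def_of_pos (by norm_num)]
    apply Real.exp_le_exp.2
    have := Real.log_pos (by norm_num : (1:ℝ) < 2)
    nlinarith
  have h1 : μ.real Gᶜ ≤ 1/2 := by
    have h2 : μ.real Gᶜ ≤ μ.real {b | Real.exp (- y * Real.log 2) ≤ ∏ i, f (b i)} :=
      measureReal_mono hsub
    have h3 : Real.exp (- y * Real.log 2) * μ.real Gᶜ ≤ Real.exp (-y) :=
      (mul_le_mul_of_nonneg_left h2 (Real.exp_pos _).le).trans (hmk.trans hI2)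
    have h4 : μ.real Gᶜ ≤ Real.exp (-(y * (1 - Real.log 2))) := by
      have : Real.exp (-y) = Real.exp (- y * Real.log 2) * Real.exp (-(y * (1 - Real.log 2))) := by
        rw [← Real.exp_add]; congr 1; ring
      rw [this] at h3
      exact le_of_mul_le_mul_left h3 (Real.exp_pos _)
    refine h4.trans ?_
    have hl := Real.log_two_lt_d9
    have h5 : 1 ≤ y * (1 - Real.log 2) := by nlinarith
    have h6 := Real.add_one_le_exp (y * (1 - Real.log 2))
    rw [Real.exp_neg, one_div]
    exact inv_anti₀ (by norm_num) (by linarith)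
  rw [probReal_compl_eq_one_sub hGm] at h1
  have h2 : (1/2 : ℝ) ≤ μ.real G := by linarith
  have h3 := ENNReal.ofReal_le_ofReal h2
  rw [ofReal_measureReal] at h3
  refine le_trans (le_of_eq ?_) h3
  rw [one_div, ENNReal.ofReal_inv_of_pos (by norm_num)]
  simp

set_option maxHeartbeats 1600000 in
theorem numer (n k m : ℕ) (hn : 2 ≤ n) (hk1 : 1 ≤ k) (hkn : k ≤ n) (ε : ℝ) (h0 : 0 < ε) (h1 : ε < 1)
    (hm : (8 * (Nat.floor (2 * k * logb 2 (n * Real.exp 1)) : ℝ) / ε) * logb 2 (8 * Real.exp 1 / ε) ≤ m) :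
    32 ≤ ε * m ∧ (((n * (2*m+1))^k : ℕ) : ℝ) ≤ (2:ℝ) ^ (ε * m / 4) := by
  have he := Real.exp_one_gt_d9
  have hn' : (2:ℝ) ≤ n := by exact_mod_cast hn
  have hk' : (1:ℝ) ≤ k := by exact_mod_cast hk1
  have hkn' : (k:ℝ) ≤ n := by exact_mod_cast hkn
  set L := logb 2 (n * Real.exp 1) with hL
  set T := logb 2 (8 * Real.exp 1 / ε) with hT
  set e := Real.exp 1 with hee
  have hLe : (2:ℝ)^L = n * e := Real.rpow_logb (by norm_num) (by norm_num) (by positivity)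
  have hTe : (2:ℝ)^T = 8 * e / ε := Real.rpow_logb (by norm_num) (by norm_num) (by positivity)
  have hL2 : 2 ≤ L := by
    rw [hL, Real.le_logb_iff_rpow_le (by norm_num) (by positivity)]
    norm_num; nlinarith
  have hT4 : 4 ≤ T := by
    rw [hT, Real.le_logb_iff_rpow_le (by norm_num) (by positivity), le_div_iff₀ h0]
    norm_num; nlinarith
  set d : ℝ := (Nat.floor (2 * k * L) : ℝ) with hd
  have hkL : 2 ≤ k * L := by nlinarith
  have hd1 : d ≤ 2 * k * L := Nat.floor_le (by positivity)
  have hd2 : k * L ≤ d := by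
    have := Nat.lt_floor_add_one (2 * k * L)
    linarith
  have hdpos : 0 < d := by linarith
  have hm2 : 8 * d * T ≤ ε * m := by
    have : 8 * d / ε * T = 8 * d * T / ε := by ring
    rw [this, div_le_iff₀ h0] at hm
    linarith
  have h32 : 32 ≤ ε * m := by nlinarith
  refine ⟨h32, ?_⟩
  set M : ℝ := (m : ℝ) with hM
  have hM1 : 1 ≤ M := by nlinarith
  set t := ε * M / (8 * d) with ht
  have htT : T ≤ t := by
    rw [ht, le_div_iff₀ (by positivity)]; linarith
  have hMt : ε * M = 8 * d * t := by rw [ht]; field_simp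
  have hMt' : M = 8 * d * t / ε := by rw [← hMt]; field_simp
  have hself : ∀ z : ℝ, 1 ≤ z → z ≤ (2:ℝ)^z := by
    intro z hz
    have := one_add_mul_self_le_rpow_one_add (s := 1) (by norm_num) hz
    norm_num at this
    linarith
  have hLL := hself L (by linarith)
  have htt := hself t (by linarith)
  have hbase : n * (2 * M + 1) ≤ (2:ℝ)^(T + (L + L + L) + t) := by
    rw [Real.rpow_add (by norm_num), Real.rpow_add (by norm_num), Real.rpow_add (by norm_num),
      Real.rpow_add (by norm_num)]
    have ht0 : 0 < t := by linarith
    have he3 : 8 ≤ e * e * e := by nlinarith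
    calc n * (2 * M + 1) ≤ n * (4 * M) := by nlinarith
      _ = n * (4 * d) * t * (8 / ε) := by rw [hMt']; ring
      _ ≤ n * (4 * (2 * n * L)) * t * (8 / ε) := by
          have : d ≤ 2 * n * L := hd1.trans (by nlinarith)
          gcongr
      _ = 8 * (n * n * L * t * (8 / ε)) := by ring
      _ ≤ (e * e * e) * (n * n * L * t * (8 / ε)) := by gcongr
      _ = (8 * e / ε) * ((n * e) * (n * e) * L) * t := by ring
      _ ≤ _ := by
        rw [hTe]
        have : (2:ℝ)^L * 2^L * L ≤ 2^L * 2^L * 2^L := by gcongr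
        rw [← hLe]
        gcongr
  push_cast
  calc (n * (2 * M + 1))^k ≤ ((2:ℝ)^(T + (L + L + L) + t))^k := by gcongr
    _ = (2:ℝ)^((T + (L + L + L) + t) * k) := by rw [← Real.rpow_natCast, ← Real.rpow_mul (by norm_num)]
    _ ≤ _ := by
      apply Real.rpow_le_rpow_of_exponent_le (by norm_num)
      rw [hMt]
      have a1 : T + (L + L + L) + t ≤ 2 * (L * t) := by nlinarith
      have a2 : (k * L) * t ≤ d * t := by
        have : 0 ≤ t := by linarith
        gcongr
      nlinarith

theorem consistent_obcs_pac (n k : ℕ) (hn : 2 ≤ n) (hk1 : 1 ≤ k) (hkn : k ≤ n)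
    (P : Measure (Fin n → ℝ)) [IsProbabilityMeasure P]
    (x : Fin n → ℝ) (hx : sparse n k x)
    (ε δ : ℝ) (hε : ε ∈ Set.Ioo (0 : ℝ) 1) (hδ : δ ∈ Set.Ioo (0 : ℝ) 1)
    (m : ℕ)
    (hm : max ((8 * (Nat.floor (2 * k * logb 2 (n * Real.exp 1)) : ℝ) / ε) * logb 2 (8 * Real.exp 1 / ε))
              ((4 / ε) * logb 2 (2 / δ)) ≤ (m : ℝ)) :
    (Measure.pi fun _ : Fin m => P)
      {a : Fin m → Fin n → ℝ | ∃ xh : Fin n → ℝ, sparse n k xh ∧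
        (∀ i : Fin m, (0 ≤ ∑ j, a i j * xh j) ↔ (0 ≤ ∑ j, a i j * x j)) ∧
        ε < (P {v : Fin n → ℝ | ¬ ((0 ≤ ∑ j, v j * xh j) ↔ (0 ≤ ∑ j, v j * x j))}).toReal}
      ≤ ENNReal.ofReal δ := by
  classical
  obtain ⟨h0, h1⟩ := hε
  obtain ⟨hd0, hd1⟩ := hδ
  obtain ⟨h32, hPi⟩ := numer n k m hn hk1 hkn ε h0 h1 ((le_max_left _ _).trans hm)
  have hm2 := (le_max_right _ _).trans hm
  set r := ⌈ε * m / 2⌉₊ with hr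
  have hBad := Bad_le n k m r hkn x P
  set μ := Measure.pi fun _ : Fin m => P with hμ
  set μ2 := Measure.pi fun _ : Fin m => P.prod P with hμ2
  have hmp := measurePreserving_arrowProdEquivProdArrow (Fin n → ℝ) (Fin n → ℝ) (Fin m)
    (fun _ => P) (fun _ => P)
  set e := MeasurableEquiv.arrowProdEquivProdArrow (Fin n → ℝ) (Fin n → ℝ) (Fin m) with he
  have hmp' : MeasurePreserving e.symm (μ.prod μ) μ2 := MeasurePreserving.symm e hmp
  have hB := meas_Bad n k m r x
  have hB' : MeasurableSet (e.symm ⁻¹' Bad n k m r x) := hmp'.measurable hB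
  have hBeq : (μ.prod μ) (e.symm ⁻¹' Bad n k m r x) = μ2 (Bad n k m r x) :=
    hmp'.measure_preimage hB.nullMeasurableSet
  have hsub : {a : Fin m → Fin n → ℝ | ∃ xh : Fin n → ℝ, sparse n k xh ∧
        (∀ i : Fin m, (0 ≤ ∑ j, a i j * xh j) ↔ (0 ≤ ∑ j, a i j * x j)) ∧
        ε < (P {v : Fin n → ℝ | ¬ ((0 ≤ ∑ j, v j * xh j) ↔ (0 ≤ ∑ j, v j * x j))}).toReal}
      ⊆ {a | 2⁻¹ ≤ μ (Prod.mk a ⁻¹' (e.symm ⁻¹' Bad n k m r x))} := by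
    rintro a ⟨xh, hs, hcons, herr⟩
    have hg := ghost P {v | err x xh v} (meas_err x xh) m ε herr.le (by linarith)
    refine hg.trans (measure_mono ?_)
    intro b hb
    refine ⟨xh, hs, fun i => ?_, ?_⟩
    · have := hcons i
      exact not_not.2 this
    · have hb' : r ≤ (Finset.univ.filter fun i => b i ∈ {v | err x xh v}).card := hb
      refine hb'.trans (Finset.card_le_card fun i hi => ?_)
      rw [Finset.mem_filter] at hi ⊢
      exact hi
  have hmk := mul_meas_ge_le_lintegral (μ := μ) (measurable_measure_prodMk_left (ν := μ) hB') 2⁻¹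
  rw [← Measure.prod_apply hB', hBeq] at hmk
  refine (measure_mono hsub).trans ?_
  set Y := μ {a | 2⁻¹ ≤ μ (Prod.mk a ⁻¹' (e.symm ⁻¹' Bad n k m r x))} with hY
  have hYt : Y ≠ ⊤ := measure_ne_top _ _
  rw [← ENNReal.ofReal_toReal hYt]
  apply ENNReal.ofReal_le_ofReal
  have hXt : μ2 (Bad n k m r x) ≠ ⊤ := measure_ne_top _ _
  have r1 := ENNReal.toReal_mono hXt hmk
  have r2 := ENNReal.toReal_mono (by finiteness) hBad
  rw [ENNReal.toReal_mul] at r1 r2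
  simp only [ENNReal.toReal_inv, ENNReal.toReal_ofNat, ENNReal.toReal_pow, ENNReal.toReal_natCast] at r1 r2
  set X := (μ2 (Bad n k m r x)).toReal with hX
  have hX0 : 0 ≤ X := ENNReal.toReal_nonneg
  set q := (2:ℝ)^(ε * m / 4) with hq
  have hq0 : 0 < q := by positivity
  have hqq : q * q ≤ 2^r := by
    rw [hq, ← Real.rpow_add (by norm_num), ← Real.rpow_natCast]
    apply Real.rpow_le_rpow_of_exponent_le (by norm_num)
    have := Nat.le_ceil (ε * m / 2)
    rw [← hr] at this
    linarith
  have hqd : 2 / δ ≤ q := by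
    rw [hq, ← Real.logb_le_iff_le_rpow (by norm_num) (by positivity)]
    have : 4 / ε * logb 2 (2 / δ) = 4 * logb 2 (2/δ) / ε := by ring
    rw [this, div_le_iff₀ h0] at hm2
    linarith
  have s1 : X * (q * q) ≤ q := (mul_le_mul_of_nonneg_left hqq hX0).trans (r2.trans hPi)
  have s2 : X * q ≤ 1 := by
    have : (X * q) * q ≤ 1 * q := by linarith
    exact le_of_mul_le_mul_right this hq0
  have s3 : X * (2 / δ) ≤ 1 := (mul_le_mul_of_nonneg_left hqd hX0).trans s2
  have s4 : X * 2 ≤ δ := by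
    rw [← mul_div_assoc, div_le_one hd0] at s3
    exact s3
  linarith
end
end

section
/- Let 1 ≤ k ≤ n be integers with d := k·(⌊lg(n/k)⌋ + 1) ≥ 2, and let 0 < ε ≤ 1/8 and 0 < δ ≤ 1/100. Then there exists a probability measure P on ℝ^n (with the Borel σ-algebra) such that for every integer m with m < (d − 1)/(32·ε) and every map A : (ℝ^n × {0,1})^m → Σ_k, there exists a k-sparse target x ∈ Σ_k for which the P^m-outer measure of the set of sample sequences (a_1, …, a_m) ∈ (ℝ^n)^m satisfying P( H(A((a_1, 1_{H(x)}(a_1)), …, (a_m, 1_{H(x)}(a_m)))) Δ H(x) ) > ε is greater than δ. -/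
open Real MeasureTheory
open scoped Classical

noncomputable section

theorem aux_real_sum {α : Type*} [Fintype α] [MeasurableSpace α] [MeasurableSingletonClass α]
    (μ : Measure α) [IsFiniteMeasure μ] (p : α → Prop) [DecidablePred p] :
    μ.real {a | p a} = ∑ a, if p a then μ.real {a} else 0 := by
  rw [← Finset.sum_filter]
  have h := sum_measureReal_singleton (μ := μ) (Finset.univ.filter p)
  rw [h]
  congr 1
  ext a; simp

theorem aux_core_measure {ι : Type*} [Fintype ι] [MeasurableSpace ι] [MeasurableSingletonClass ι]
    (b : ι) (hd : 2 ≤ Fintype.card ι) (ε : ℝ) (hε : 0 < ε) (hε' : ε ≤ 1 / 8) :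
    ∃ Q : Measure ι, IsProbabilityMeasure Q ∧ 
      ∀ j, j ≠ b → Q.real {j} = 8 * ε / ((Fintype.card ι : ℝ) - 1) := by
  have hd1 : (0:ℝ) < (Fintype.card ι : ℝ) - 1 := by
    have : (2:ℝ) ≤ Fintype.card ι := by exact_mod_cast hd
    linarith
  let f : ι → ℝ := fun j => if j = b then 1 - 8 * ε else 8 * ε / ((Fintype.card ι : ℝ) - 1)
  have hf0 : ∀ j, 0 ≤ f j := by
    intro j; simp only [f]; split_ifs
    · linarith
    · positivity
  have hf1 : ∑ j, f j = 1 := by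
    rw [← Finset.add_sum_erase _ _ (Finset.mem_univ b)]
    have : ∑ j ∈ Finset.univ.erase b, f j
        = ∑ j ∈ Finset.univ.erase b, 8 * ε / ((Fintype.card ι : ℝ) - 1) := by
      apply Finset.sum_congr rfl
      intro j hj
      simp only [f, if_neg (Finset.ne_of_mem_erase hj)]
    rw [this, Finset.sum_const, Finset.card_erase_of_mem (Finset.mem_univ b), Finset.card_univ,
      nsmul_eq_mul, Nat.cast_sub (by omega)]
    simp only [f, if_true, Nat.cast_one]
    field_simp
    ring
  let p : PMF ι := PMF.ofFintype (fun j => ENNReal.ofReal (f j)) (by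
    rw [← ENNReal.ofReal_sum_of_nonneg (fun j _ => hf0 j), hf1, ENNReal.ofReal_one])
  refine ⟨p.toMeasure, inferInstance, fun j hj => ?_⟩
  rw [measureReal_def, PMF.toMeasure_apply_singleton _ _ (measurableSet_singleton j)]
  simp only [p, PMF.ofFintype_apply]
  rw [ENNReal.toReal_ofReal (hf0 j)]
  simp only [f, if_neg hj]

theorem aux_core {ι : Type*} [Fintype ι] [MeasurableSpace ι] [MeasurableSingletonClass ι]
    (b : ι) (hd : 2 ≤ Fintype.card ι) (ε : ℝ) (hε : 0 < ε) (Q : Measure ι)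
    [IsProbabilityMeasure Q]
    (hQ : ∀ j, j ≠ b → Q.real {j} = 8 * ε / ((Fintype.card ι : ℝ) - 1))
    (m : ℕ) (hm : (m : ℝ) < ((Fintype.card ι : ℝ) - 1) / (32 * ε))
    (A : (ι → Bool) → (Fin m → ι) → (ι → Bool))
    (hA : ∀ σ σ' a, (∀ i, σ (a i) = σ' (a i)) → A σ a = A σ' a) :
    ∃ σ, 1 / 5 < (Measure.pi fun _ : Fin m => Q).real {a | ε < Q.real {j | A σ a j ≠ σ j}} := by
  set D : ℝ := (Fintype.card ι : ℝ) - 1 with hD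
  have hd1 : (0:ℝ) < D := by
    have : (2:ℝ) ≤ Fintype.card ι := by exact_mod_cast hd
    linarith
  set μ := (Measure.pi fun _ : Fin m => Q) with hμ
  let w : (Fin m → ι) → ℝ := fun a => μ.real {a}
  have hw0 : ∀ a, 0 ≤ w a := fun a => measureReal_nonneg
  have hw1 : ∑ a, w a = 1 := by
    simp [w]
  have hQb : Q.real {j | j ≠ b} = 8 * ε := by
    rw [aux_real_sum]
    rw [← Finset.sum_filter, Finset.sum_congr rfl (g := fun _ => 8 * ε / D)]
    · have : (Finset.univ.filter fun j => j ≠ b) = Finset.univ.erase b := by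
        ext; simp
      rw [this, Finset.sum_const, Finset.card_erase_of_mem (Finset.mem_univ b), Finset.card_univ,
        nsmul_eq_mul, Nat.cast_sub (by omega), Nat.cast_one, ← hD]
      field_simp
    · intro j hj
      exact hQ j (by simpa using hj)
  -- number of informative samples
  let N : (Fin m → ι) → Finset (Fin m) := fun a => Finset.univ.filter fun i => a i ≠ b
  have hEN : ∑ a, w a * ((N a).card : ℝ) = m * (8 * ε) := by
    have h1 : ∀ a, w a * ((N a).card : ℝ) = ∑ i, if a i ≠ b then w a else 0 := by
      intro a
      rw [← Finset.sum_filter, Finset.sum_const, nsmul_eq_mul, mul_comm]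
    simp_rw [h1]
    rw [Finset.sum_comm]
    have h2 : ∀ i : Fin m, (∑ a, if a i ≠ b then w a else 0) = 8 * ε := by
      intro i
      have h3 := aux_real_sum μ (fun a => a i ≠ b)
      have h4 : μ.real ((fun a => a i) ⁻¹' {j | j ≠ b}) = Q.real {j | j ≠ b} :=
        (measurePreserving_eval (fun _ : Fin m => Q) i).measureReal_preimage
          (Set.toFinite _).measurableSet.nullMeasurableSet
      rw [← hQb, ← h4, ← h3]
      rfl
    rw [Finset.sum_congr rfl fun i _ => h2 i]
    simp
  let bad : (ι → Bool) → (Fin m → ι) → Prop := fun σ a => ε < Q.real {j | A σ a j ≠ σ j}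
  -- key pairing
  have key : ∀ a, ((N a).card : ℝ) < D / 2 →
      (Fintype.card (ι → Bool) : ℝ) / 2 ≤ ((Finset.univ.filter fun σ => bad σ a).card : ℝ) := by
    intro a ha
    let U : Finset ι := (Finset.univ.erase b) \ ((N a).image a)
    have hU : D / 2 < (U.card : ℝ) := by
      have h1 := Finset.le_card_sdiff ((N a).image a) (Finset.univ.erase b)
      have h2 : ((N a).image a).card ≤ (N a).card := Finset.card_image_le
      rw [Finset.card_erase_of_mem (Finset.mem_univ b), Finset.card_univ] at h1
      have h3 : Fintype.card ι ≤ U.card + (N a).card + 1 := by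
        change _ ≤ U.card at h1
        omega
      have h4 : (Fintype.card ι : ℝ) ≤ U.card + (N a).card + 1 := by exact_mod_cast h3
      linarith
    have hUa : ∀ i, a i ∉ U := by
      intro i hi
      simp only [U, Finset.mem_sdiff, Finset.mem_erase, Finset.mem_image, N, Finset.mem_filter] at hi
      exact hi.2 ⟨i, ⟨Finset.mem_univ _, hi.1.1⟩, rfl⟩
    let φ : (ι → Bool) → (ι → Bool) := fun σ j => if j ∈ U then !(σ j) else σ j
    have hφ : Function.Involutive φ := by
      intro σ; funext j; simp only [φ]; split_ifs <;> simp
    have hAφ : ∀ σ, A (φ σ) a = A σ a := by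
      intro σ
      apply hA
      intro i
      simp only [φ, if_neg (hUa i)]
    have herr : ∀ σ, ¬ bad σ a → ((U.filter fun j => A σ a j ≠ σ j).card : ℝ) ≤ D / 8 := by
      intro σ hσ
      have h1 : Q.real {j | A σ a j ≠ σ j} ≤ ε := not_lt.mp hσ
      have h2 : Q.real ((U.filter fun j => A σ a j ≠ σ j : Finset ι) : Set ι)
          ≤ Q.real {j | A σ a j ≠ σ j} := by
        apply measureReal_mono
        · intro j hj
          simp only [Finset.coe_filter, Set.mem_ofPred_eq] at hj
          exact hj.2
        · exact measure_ne_top _ _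
      rw [← sum_measureReal_singleton, Finset.sum_congr rfl (g := fun _ => 8 * ε / D), 
        Finset.sum_const, nsmul_eq_mul] at h2
      · have h3 := h2.trans h1
        rw [mul_div_assoc', div_le_iff₀ hd1] at h3
        have : ε * (((U.filter fun j => A σ a j ≠ σ j).card : ℝ) * 8) ≤ ε * D := by linarith
        have := le_of_mul_le_mul_left this hε
        linarith
      · intro j hj
        apply hQ
        simp only [U, Finset.mem_filter, Finset.mem_sdiff, Finset.mem_erase] at hj
        exact hj.1.1.1
    have hpair : ∀ σ, ¬ bad σ a → bad (φ σ) a := by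
      intro σ h1
      by_contra h2
      have e1 := herr _ h1
      have e2 := herr _ h2
      have e3 : (U.filter fun j => A (φ σ) a j ≠ φ σ j) = U.filter fun j => ¬ (A σ a j ≠ σ j) := by
        apply Finset.filter_congr
        intro j hj
        rw [hAφ]
        simp only [φ, if_pos hj]
        cases A σ a j <;> cases σ j <;> simp
      rw [e3] at e2
      have e4 := Finset.card_filter_add_card_filter_not (s := U) (fun j => A σ a j ≠ σ j)
      have e5 : ((U.filter fun j => A σ a j ≠ σ j).card : ℝ)
        + ((U.filter fun j => ¬ (A σ a j ≠ σ j)).card : ℝ) = U.card := by exact_mod_cast e4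
      linarith
    have hle : (Finset.univ.filter fun σ => ¬ bad σ a).card
        ≤ (Finset.univ.filter fun σ => bad σ a).card := by
      apply Finset.card_le_card_of_injOn φ
      · intro σ hσ
        simp only [Finset.coe_filter, Finset.mem_univ, true_and, Set.mem_ofPred_eq] at hσ ⊢
        exact hpair σ hσ
      · exact hφ.injective.injOn
    have htot := Finset.card_filter_add_card_filter_not (s := (Finset.univ : Finset (ι → Bool)))
      (fun σ => bad σ a)
    rw [Finset.card_univ] at htot
    have : Fintype.card (ι → Bool) ≤ 2 * (Finset.univ.filter fun σ => bad σ a).card := by omega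
    have : (Fintype.card (ι → Bool) : ℝ) ≤ 2 * (Finset.univ.filter fun σ => bad σ a).card := by
      exact_mod_cast this
    linarith
  by_contra hcon
  push Not at hcon
  set C : ℝ := (Fintype.card (ι → Bool) : ℝ) with hC
  have hCpos : 0 < C := by
    rw [hC]; exact_mod_cast Fintype.card_pos
  have hsum : ∑ σ : ι → Bool, μ.real {a | bad σ a} ≤ C * (1 / 5) := by
    calc _ ≤ ∑ σ : ι → Bool, (1 / 5 : ℝ) := Finset.sum_le_sum fun σ _ => hcon σ
      _ = _ := by rw [Finset.sum_const, nsmul_eq_mul, Finset.card_univ]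
  have hswap : ∑ σ : ι → Bool, μ.real {a | bad σ a}
      = ∑ a, w a * ((Finset.univ.filter fun σ => bad σ a).card : ℝ) := by
    rw [Finset.sum_congr rfl fun σ _ => aux_real_sum μ (bad σ), Finset.sum_comm]
    apply Finset.sum_congr rfl
    intro a _
    rw [← Finset.sum_filter, Finset.sum_const, nsmul_eq_mul, mul_comm]
  have hpt : ∀ a, w a * (C / 2 * (1 - ((N a).card : ℝ) / (D / 2)))
      ≤ w a * ((Finset.univ.filter fun σ => bad σ a).card : ℝ) := by
    intro a
    apply mul_le_mul_of_nonneg_left _ (hw0 a)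
    by_cases h : ((N a).card : ℝ) < D / 2
    · refine le_trans ?_ (key a h)
      have : 0 ≤ ((N a).card : ℝ) / (D / 2) := by positivity
      nlinarith
    · have : 1 ≤ ((N a).card : ℝ) / (D / 2) := by
        rw [le_div_iff₀ (by linarith)]; linarith
      have h0 : (0:ℝ) ≤ ((Finset.univ.filter fun σ => bad σ a).card : ℝ) := by positivity
      nlinarith
  have hfin := Finset.sum_le_sum fun a (_ : a ∈ Finset.univ) => hpt a
  rw [← hswap] at hfin
  have hL : ∑ a, w a * (C / 2 * (1 - ((N a).card : ℝ) / (D / 2)))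
      = C / 2 * (1 - (m * (8 * ε)) / (D / 2)) := by
    rw [← hEN]
    have : ∀ a, w a * (C / 2 * (1 - ((N a).card : ℝ) / (D / 2)))
      = C / 2 * w a - C / 2 / (D / 2) * (w a * ((N a).card : ℝ)) := by intro a; ring
    simp_rw [this]
    rw [Finset.sum_sub_distrib, ← Finset.mul_sum, ← Finset.mul_sum, hw1]
    ring
  rw [hL] at hfin
  have hm2 : (m * (8 * ε)) / (D / 2) ≤ 1 / 2 := by
    rw [lt_div_iff₀ (by positivity)] at hm
    rw [div_le_iff₀ (by linarith)]
    linarith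
  nlinarith

theorem aux_shatter_s17 (n k L : ℕ) (h : k * 2 ^ L ≤ n) :
    ∃ (pts : Fin k × Option (Fin L) → Fin n → ℝ)
      (tgt : (Fin k × Option (Fin L) → Bool) → Fin n → ℝ),
      ∀ σ, sparse n k (tgt σ) ∧ ∀ j, (0 ≤ ∑ i, pts j i * tgt σ i) ↔ σ j = true := by
  have hc : Fintype.card (Fin k × (Fin L → Bool)) ≤ Fintype.card (Fin n) := by simpa using h
  obtain ⟨e⟩ := Function.Embedding.nonempty_of_card_le hc
  let s : Option (Fin L) → (Fin L → Bool) → ℝ := fun o c =>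
    match o with
    | none => 1
    | some l => if c l = true then 1 else -1
  let pts : Fin k × Option (Fin L) → Fin n → ℝ := fun j i =>
    ∑ c : Fin L → Bool, if e (j.1, c) = i then s j.2 c else 0
  let cc : (Fin k × Option (Fin L) → Bool) → Fin k → (Fin L → Bool) := fun σ B l =>
    (σ (B, some l) == σ (B, none))
  let sg : Bool → ℝ := fun x => if x = true then 1 else -1
  let tgt : (Fin k × Option (Fin L) → Bool) → Fin n → ℝ := fun σ i =>
    ∑ B : Fin k, if e (B, cc σ B) = i then sg (σ (B, none)) else 0
  refine ⟨pts, tgt, fun σ => ⟨?_, ?_⟩⟩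
  · refine ⟨Finset.univ.image fun B => e (B, cc σ B), ?_, ?_⟩
    · exact Finset.card_image_le.trans (by simp)
    · intro i hi
      apply Finset.sum_eq_zero
      intro B _
      rw [if_neg]
      intro h
      exact hi (Finset.mem_image.mpr ⟨B, Finset.mem_univ _, h⟩)
  · rintro ⟨B, o⟩
    have hpts : ∀ B' c, pts (B, o) (e (B', c)) = if B = B' then s o c else 0 := by
      intro B' c
      simp only [pts, e.injective.eq_iff, Prod.mk.injEq]
      by_cases hB : B = B'
      · simp [hB]
      · simp [hB]
    have hin : ∑ i, pts (B, o) i * tgt σ i = s o (cc σ B) * sg (σ (B, none)) := by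
      simp only [tgt, Finset.mul_sum]
      rw [Finset.sum_comm]
      have : ∀ B', (∑ i, pts (B, o) i * (if e (B', cc σ B') = i then sg (σ (B', none)) else 0))
          = if B = B' then s o (cc σ B') * sg (σ (B', none)) else 0 := by
        intro B'
        simp only [mul_ite, mul_zero, Finset.sum_ite_eq, Finset.mem_univ, if_true, hpts]
        split_ifs <;> simp
      rw [Finset.sum_congr rfl fun B' _ => this B']
      simp
    rw [hin]
    rcases o with _ | l
    · simp only [s, sg]
      cases σ (B, none) <;> norm_num
    · simp only [s, sg, cc]
      rcases Bool.eq_false_or_eq_true (σ (B, none)) with h1 | h1 <;>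
        rcases Bool.eq_false_or_eq_true (σ (B, some l)) with h2 | h2 <;> simp [h1, h2]

theorem obcs_sample_complexity_lower_bound (n k : ℕ) (hk1 : 1 ≤ k) (hkn : k ≤ n)
    (hd : 2 ≤ k * (Nat.floor (logb 2 ((n : ℝ) / (k : ℝ))) + 1))
    (ε δ : ℝ) (hε : 0 < ε) (hε' : ε ≤ 1 / 8) (hδ : 0 < δ) (hδ' : δ ≤ 1 / 100) :
    ∃ P : Measure (Fin n → ℝ), IsProbabilityMeasure P ∧
      ∀ m : ℕ,
        (m : ℝ) < (((k * (Nat.floor (logb 2 ((n : ℝ) / (k : ℝ))) + 1) : ℕ) : ℝ) - 1) / (32 * ε) →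
        ∀ A : (Fin m → (Fin n → ℝ) × Bool) → (Fin n → ℝ),
          (∀ s, sparse n k (A s)) →
          ∃ x : Fin n → ℝ, sparse n k x ∧
            ENNReal.ofReal δ <
              (Measure.pi fun _ : Fin m => P)
                {a : Fin m → Fin n → ℝ |
                  ε < (P (symmDiff
                        (halfSpace n (A fun i =>
                          (a i, if 0 ≤ ∑ j, a i j * x j then true else false)))
                        (halfSpace n x))).toReal} := by
  set L := Nat.floor (logb 2 ((n : ℝ) / (k : ℝ))) with hL
  have hk0 : (0:ℝ) < k := by exact_mod_cast hk1
  have hnk : (1:ℝ) ≤ (n:ℝ) / k := by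
    rw [le_div_iff₀ hk0, one_mul]; exact_mod_cast hkn
  have hkL : k * 2 ^ L ≤ n := by
    have h1 : (L : ℝ) ≤ logb 2 ((n : ℝ) / (k : ℝ)) :=
      Nat.floor_le (Real.logb_nonneg (by norm_num) hnk)
    rw [Real.le_logb_iff_rpow_le (by norm_num) (by linarith), Real.rpow_natCast,
      le_div_iff₀ hk0] at h1
    have h2 : ((k * 2 ^ L : ℕ) : ℝ) ≤ n := by push_cast; linarith
    exact_mod_cast h2
  obtain ⟨pts, tgt, ht⟩ := aux_shatter_s17 n k L hkL
  letI : MeasurableSpace (Fin k × Option (Fin L)) := ⊤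
  haveI : DiscreteMeasurableSpace (Fin k × Option (Fin L)) := ⟨fun _ => trivial⟩
  have hcard : Fintype.card (Fin k × Option (Fin L)) = k * (L + 1) := by simp
  obtain ⟨Q, hQp, hQ⟩ := aux_core_measure ((⟨0, hk1⟩, none) : Fin k × Option (Fin L))
    (by rw [hcard]; exact hd) ε hε hε'
  have hpm : Measurable pts := measurable_of_finite _
  have hPp : IsProbabilityMeasure (Q.map pts) := Measure.isProbabilityMeasure_map hpm.aemeasurable
  refine ⟨Q.map pts, hPp, ?_⟩
  intro m hm A hA
  obtain ⟨σ, hσ⟩ := aux_core ((⟨0, hk1⟩, none) : Fin k × Option (Fin L))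
    (by rw [hcard]; exact hd) ε hε Q hQ m (by rw [hcard]; exact hm)
    (fun σ a j => decide (pts j ∈ halfSpace n (A fun i => (pts (a i), σ (a i)))))
    (by
      intro σ σ' a h
      simp only [h])
  refine ⟨tgt σ, (ht σ).1, ?_⟩
  have hpi : (Measure.pi fun _ : Fin m => Q.map pts)
      = (Measure.pi fun _ : Fin m => Q).map fun a i => pts (a i) :=
    (Measure.pi_map_pi (μ := fun _ : Fin m => Q) (f := fun _ => pts)
      fun _ => hpm.aemeasurable).symm
  rw [hpi]
  refine lt_of_lt_of_le ?_ (Measure.le_map_apply (measurable_of_finite _).aemeasurable _)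
  have h1 : ENNReal.ofReal δ < ENNReal.ofReal ((Measure.pi fun _ : Fin m => Q).real
    {a | ε < Q.real {j | decide (pts j ∈ halfSpace n (A fun i => (pts (a i), σ (a i)))) ≠ σ j}}) := by
    apply (ENNReal.ofReal_lt_ofReal_iff (by linarith)).2
    linarith
  refine h1.trans_le ?_
  rw [ofReal_measureReal]
  apply measure_mono
  intro a ha
  have ha' : ε < Q.real {j | decide (pts j ∈ halfSpace n (A fun i => (pts (a i), σ (a i)))) ≠ σ j} := ha
  show ε < ((Q.map pts) _).toReal
  refine ha'.trans_le ?_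
  have hlab : ∀ j, (if 0 ≤ ∑ l, pts j l * tgt σ l then true else false) = σ j := by
    intro j
    have := (ht σ).2 j
    by_cases h : σ j = true
    · rw [if_pos (this.2 h), h]
    · rw [if_neg (fun h' => h (this.1 h'))]; simpa using h
  simp only [hlab]
  rw [measureReal_def]
  apply ENNReal.toReal_mono (measure_ne_top _ _)
  refine le_trans (measure_mono ?_) (Measure.le_map_apply hpm.aemeasurable _)
  intro j hj
  have hj' : decide (pts j ∈ halfSpace n (A fun i => (pts (a i), σ (a i)))) ≠ σ j := hj
  have hx : pts j ∈ halfSpace n (tgt σ) ↔ σ j = true := (ht σ).2 j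
  rw [Set.mem_preimage, Set.mem_symmDiff, hx]
  by_cases h : pts j ∈ halfSpace n (A fun i => (pts (a i), σ (a i))) <;> simp [h] at hj' ⊢
  · simpa using hj'
  · simpa using hj'
end
end
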